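/- arXiv:1310.7767 — 3 statements merged into one kernel-verified Lean document; each statement's English description precedes it below -/
import Mathlib

section
/- Let λ ∈ ℂ and let ψ : [0,∞) → ℂ be a nonzero, twice continuously differentiable function with ψ(0) = 0, ∫₀^∞ |ψ(x)|² dx < ∞, satisfying −ψ''(x) + i·x³·ψ(x) = λ·ψ(x) for all x ≥ 0. Then Re λ > 0 and Im λ > 0. (Eigenvalues of the half-line Dirichlet operator H₊ = p² + ix³ on (0,∞) have positive real and imaginary parts.) -/
open MeasureTheory Set

/-!
Put `F = conj ψ * ψ'` and `V x = i x ^ 3`. The differential equation gives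
`(‖ψ‖ ^ 2)' = 2 Re F`, `(Re F)' = ‖ψ'‖ ^ 2 + Re (V - λ) ‖ψ‖ ^ 2` and
`(Im F)' = Im (V - λ) ‖ψ‖ ^ 2`, while `F 0 = 0` by the Dirichlet condition.

If `Re λ ≤ 0`, then `Re F` increases from `0`, so `‖ψ‖ ^ 2` increases; being integrable, it
vanishes.

If `Im λ ≤ 0`, then `Im F` increases from `0`. Since `(Re F)'` is at least `‖ψ'‖ ^ 2` minus an
integrable function, and `Re F` cannot stay positive near infinity, `ψ'` is square integrable.
Hence `Im F` is integrable and increasing, so it vanishes, and so does its derivative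
`Im (V - λ) ‖ψ‖ ^ 2`.
-/

open Filter Topology ComplexConjugate

open scoped InnerProductSpace

lemma nonpos_of_monotoneOn_of_integrableOn_Ioi {g : ℝ → ℝ} {a : ℝ} (hg : MonotoneOn g (Ici a))
    (hint : IntegrableOn g (Ioi a)) {x : ℝ} (hx : a ≤ x) : g x ≤ 0 := by
  by_contra! hpos
  have hconst : IntegrableOn (fun _ ↦ g x) (Ioi x) := by
    refine (hint.mono_set (Ioi_subset_Ioi hx)).mono' aestronglyMeasurable_const
      (ae_restrict_of_forall_mem measurableSet_Ioi fun y hy ↦ ?_)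
    rw [Real.norm_of_nonneg hpos.le]
    exact hg hx (hx.trans hy.le) hy.le
  simp [integrableOn_const_iff, hpos.ne'] at hconst

lemma monotoneOn_Ici_of_hasDerivAt_nonneg {g g' : ℝ → ℝ} {a : ℝ} (hg : ContinuousOn g (Ici a))
    (hderiv : ∀ x, a < x → HasDerivAt g (g' x) x) (hnonneg : ∀ x, a < x → 0 ≤ g' x) :
    MonotoneOn g (Ici a) := by
  refine monotoneOn_of_hasDerivWithinAt_nonneg (f' := g') (convex_Ici a) hg ?_ ?_ <;>
    rw [interior_Ici]
  exacts [fun x hx ↦ (hderiv x hx).hasDerivWithinAt, hnonneg]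

section InnerProductSpace

variable {E : Type*} [NormedAddCommGroup E] [InnerProductSpace ℝ E] {f f' f'' : ℝ → E} {a : ℝ}

lemma eqOn_zero_of_inner_deriv_nonneg (hf : ContinuousOn f (Ici a))
    (hderiv : ∀ x, a < x → HasDerivAt f (f' x) x)
    (hint : IntegrableOn (fun x ↦ ‖f x‖ ^ 2) (Ioi a))
    (hnonneg : ∀ x, a < x → 0 ≤ ⟪f x, f' x⟫_ℝ) : EqOn f 0 (Ici a) := by
  have hmono : MonotoneOn (fun x ↦ ‖f x‖ ^ 2) (Ici a) :=
    monotoneOn_Ici_of_hasDerivAt_nonneg (hf.norm.pow 2) (fun x hx ↦ (hderiv x hx).norm_sq)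
      fun x hx ↦ mul_nonneg zero_le_two (hnonneg x hx)
  intro x hx
  simpa using (nonpos_of_monotoneOn_of_integrableOn_Ioi hmono hint hx).antisymm (sq_nonneg _)

lemma exists_gt_inner_deriv_nonpos (hf : ContinuousOn f (Ici a))
    (hderiv : ∀ x, a < x → HasDerivAt f (f' x) x)
    (hint : IntegrableOn (fun x ↦ ‖f x‖ ^ 2) (Ioi a)) : ∃ x, a < x ∧ ⟪f x, f' x⟫_ℝ ≤ 0 := by
  by_contra! hpos
  have hzero := eqOn_zero_of_inner_deriv_nonneg hf hderiv hint fun x hx ↦ (hpos x hx).le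
  have hlt : a < a + 1 := lt_add_one a
  simpa [hzero hlt.le] using hpos (a + 1) hlt

/-- `f` is continuously differentiable on `[a, ∞)` and twice differentiable on `(a, ∞)`, with
derivatives `f'` and `f''`. The value `f' a` is pinned down by continuity only, which makes it the
one-sided derivative at `a`; nothing is asked of `f''` beyond its being the derivative of `f'`. -/
structure HasTwoDerivsOnIci (f f' f'' : ℝ → E) (a : ℝ) : Prop where
  continuousOn : ContinuousOn f (Ici a)
  continuousOn_deriv : ContinuousOn f' (Ici a)
  hasDerivAt : ∀ x, a < x → HasDerivAt f (f' x) x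
  hasDerivAt_deriv : ∀ x, a < x → HasDerivAt f' (f'' x) x

namespace HasTwoDerivsOnIci

lemma of_contDiffOn (hf : ContDiffOn ℝ 2 f (Ici a)) :
    HasTwoDerivsOnIci f (derivWithin f (Ici a))
      (derivWithin (derivWithin f (Ici a)) (Ici a)) a := by
  have hf' : ContDiffOn ℝ 1 (derivWithin f (Ici a)) (Ici a) :=
    hf.derivWithin (uniqueDiffOn_Ici a) (by norm_num)
  have hasDerivAt_of_differentiableOn {g : ℝ → E} (hg : DifferentiableOn ℝ g (Ici a)) (x : ℝ)
      (hx : a < x) : HasDerivAt g (derivWithin g (Ici a) x) x :=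
    (hg x hx.le).hasDerivWithinAt.hasDerivAt (Ici_mem_nhds hx)
  exact ⟨hf.continuousOn, hf'.continuousOn,
    hasDerivAt_of_differentiableOn (hf.differentiableOn two_ne_zero),
    hasDerivAt_of_differentiableOn (hf'.differentiableOn one_ne_zero)⟩

lemma congr_deriv_deriv {g : ℝ → E} (hf : HasTwoDerivsOnIci f f' f'' a)
    (hg : ∀ x, a < x → f'' x = g x) : HasTwoDerivsOnIci f f' g a where
  __ := hf
  hasDerivAt_deriv x hx := (hf.hasDerivAt_deriv x hx).congr_deriv (hg x hx)

lemma continuousOn_inner_map_deriv (hf : HasTwoDerivsOnIci f f' f'' a) (A : E →L[ℝ] E) :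
    ContinuousOn (fun x ↦ ⟪f x, A (f' x)⟫_ℝ) (Ici a) :=
  hf.continuousOn.inner (A.continuous.comp_continuousOn hf.continuousOn_deriv)

lemma hasDerivAt_inner_map_deriv (hf : HasTwoDerivsOnIci f f' f'' a) (A : E →L[ℝ] E)
    {x : ℝ} (hx : a < x) :
    HasDerivAt (fun x ↦ ⟪f x, A (f' x)⟫_ℝ) (⟪f x, A (f'' x)⟫_ℝ + ⟪f' x, A (f' x)⟫_ℝ) x :=
  (hf.hasDerivAt x hx).inner ℝ (A.hasFDerivAt.comp_hasDerivAt x (hf.hasDerivAt_deriv x hx))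

lemma monotoneOn_inner_map_deriv (hf : HasTwoDerivsOnIci f f' f'' a) {A : E →L[ℝ] E}
    (hA : ∀ v, 0 ≤ ⟪v, A v⟫_ℝ) (hAf : ∀ x, a < x → 0 ≤ ⟪f x, A (f'' x)⟫_ℝ) :
    MonotoneOn (fun x ↦ ⟪f x, A (f' x)⟫_ℝ) (Ici a) :=
  monotoneOn_Ici_of_hasDerivAt_nonneg (hf.continuousOn_inner_map_deriv A)
    (fun _ hx ↦ hf.hasDerivAt_inner_map_deriv A hx) fun x hx ↦ add_nonneg (hAf x hx) (hA _)

lemma intervalIntegral_sq_norm_deriv_le (hf : HasTwoDerivsOnIci f f' f'' a) {m : ℝ}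
    (hm : ∀ x, a < x → m * ‖f x‖ ^ 2 ≤ ⟪f x, f'' x⟫_ℝ) {b : ℝ} (hb : a ≤ b) :
    ∫ x in a..b, ‖f' x‖ ^ 2 ≤
      ⟪f b, f' b⟫_ℝ - ⟪f a, f' a⟫_ℝ - m * ∫ x in a..b, ‖f x‖ ^ 2 := by
  have hmass : IntervalIntegrable (fun x ↦ ‖f x‖ ^ 2) volume a b :=
    ((hf.continuousOn.norm.pow 2).mono Icc_subset_Ici_self).intervalIntegrable_of_Icc hb
  have henergy : IntervalIntegrable (fun x ↦ ‖f' x‖ ^ 2) volume a b :=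
    ((hf.continuousOn_deriv.norm.pow 2).mono Icc_subset_Ici_self).intervalIntegrable_of_Icc hb
  have hle : ∫ x in a..b, (m * ‖f x‖ ^ 2 + ‖f' x‖ ^ 2) ≤ ⟪f b, f' b⟫_ℝ - ⟪f a, f' a⟫_ℝ := by
    refine intervalIntegral.integral_le_sub_of_hasDeriv_right_of_le hb
      ((hf.continuousOn_inner_map_deriv (.id ℝ E)).mono Icc_subset_Ici_self)
      (fun x hx ↦ (hf.hasDerivAt_inner_map_deriv (.id ℝ E) hx.1).hasDerivWithinAt)
      ((intervalIntegrable_iff_integrableOn_Icc_of_le hb).1 ((hmass.const_mul m).add henergy))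
      fun x hx ↦ ?_
    simpa using hm x hx.1
  rw [intervalIntegral.integral_add (hmass.const_mul m) henergy,
    intervalIntegral.integral_const_mul] at hle
  linarith

lemma integrableOn_sq_norm_deriv (hf : HasTwoDerivsOnIci f f' f'' a)
    (hint : IntegrableOn (fun x ↦ ‖f x‖ ^ 2) (Ioi a)) {m : ℝ}
    (hm : ∀ x, a < x → m * ‖f x‖ ^ 2 ≤ ⟪f x, f'' x⟫_ℝ) :
    IntegrableOn (fun x ↦ ‖f' x‖ ^ 2) (Ioi a) := by
  have hexists (n : ℕ) : ∃ b, a + n < b ∧ ⟪f b, f' b⟫_ℝ ≤ 0 := by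
    have han : a ≤ a + n := by simp
    exact exists_gt_inner_deriv_nonpos (hf.continuousOn.mono (Ici_subset_Ici.2 han))
      (fun x hx ↦ hf.hasDerivAt x (han.trans_lt hx)) (hint.mono_set (Ioi_subset_Ioi han))
  choose b hb hinner using hexists
  have hab (n : ℕ) : a ≤ b n := by linarith [hb n, n.cast_nonneg (α := ℝ)]
  have hb_tendsto : Tendsto b atTop atTop :=
    tendsto_atTop_mono (fun n ↦ (hb n).le)
      (tendsto_atTop_add_const_left _ a tendsto_natCast_atTop_atTop)
  refine integrableOn_Ioi_of_intervalIntegral_norm_bounded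
    (-⟪f a, f' a⟫_ℝ + |m| * ∫ x in Ioi a, ‖f x‖ ^ 2) a (fun n ↦ ?_) hb_tendsto
    (.of_forall fun n ↦ ?_)
  · exact ((hf.continuousOn_deriv.norm.pow 2).mono
      Icc_subset_Ici_self).integrableOn_Icc.mono_set Ioc_subset_Icc_self
  have hmass_le : ∫ x in a..b n, ‖f x‖ ^ 2 ≤ ∫ x in Ioi a, ‖f x‖ ^ 2 := by
    rw [intervalIntegral.integral_of_le (hab n)]
    exact setIntegral_mono_set hint (.of_forall fun _ ↦ sq_nonneg _)
      Ioc_subset_Ioi_self.eventuallyLE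
  have hmass_nonneg : 0 ≤ ∫ x in a..b n, ‖f x‖ ^ 2 :=
    intervalIntegral.integral_nonneg (hab n) fun _ _ ↦ sq_nonneg _
  calc ∫ x in a..b n, ‖‖f' x‖ ^ 2‖ = ∫ x in a..b n, ‖f' x‖ ^ 2 := by simp
    _ ≤ ⟪f (b n), f' (b n)⟫_ℝ - ⟪f a, f' a⟫_ℝ - m * ∫ x in a..b n, ‖f x‖ ^ 2 :=
      hf.intervalIntegral_sq_norm_deriv_le hm (hab n)
    _ ≤ -⟪f a, f' a⟫_ℝ + |m| * ∫ x in a..b n, ‖f x‖ ^ 2 := by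
      nlinarith [hinner n, neg_abs_le m]
    _ ≤ -⟪f a, f' a⟫_ℝ + |m| * ∫ x in Ioi a, ‖f x‖ ^ 2 := by gcongr

lemma integrableOn_inner_map_deriv (hf : HasTwoDerivsOnIci f f' f'' a)
    (hint : IntegrableOn (fun x ↦ ‖f x‖ ^ 2) (Ioi a))
    (hint' : IntegrableOn (fun x ↦ ‖f' x‖ ^ 2) (Ioi a)) (A : E →L[ℝ] E) :
    IntegrableOn (fun x ↦ ⟪f x, A (f' x)⟫_ℝ) (Ioi a) := by
  refine ((hint.add hint').const_mul ‖A‖).mono'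
    (((hf.continuousOn_inner_map_deriv A).mono Ioi_subset_Ici_self).aestronglyMeasurable
      measurableSet_Ioi)
    (.of_forall fun x ↦ ?_)
  calc ‖⟪f x, A (f' x)⟫_ℝ‖ ≤ ‖f x‖ * ‖A (f' x)‖ := norm_inner_le_norm _ _
    _ ≤ ‖f x‖ * (‖A‖ * ‖f' x‖) := by gcongr; exact A.le_opNorm _
    _ = ‖A‖ * (‖f x‖ * ‖f' x‖) := by ring
    _ ≤ ‖A‖ * (‖f x‖ ^ 2 + ‖f' x‖ ^ 2) := by
      gcongr
      have hprod : 0 ≤ ‖f x‖ * ‖f' x‖ := by positivity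
      linarith [two_mul_le_add_sq ‖f x‖ ‖f' x‖]

lemma eqOn_zero_of_inner_deriv_deriv_nonneg (hf : HasTwoDerivsOnIci f f' f'' a)
    (hint : IntegrableOn (fun x ↦ ‖f x‖ ^ 2) (Ioi a)) (hbdry : 0 ≤ ⟪f a, f' a⟫_ℝ)
    (hnonneg : ∀ x, a < x → 0 ≤ ⟪f x, f'' x⟫_ℝ) : EqOn f 0 (Ici a) := by
  have hmono : MonotoneOn (fun x ↦ ⟪f x, f' x⟫_ℝ) (Ici a) :=
    hf.monotoneOn_inner_map_deriv (A := .id ℝ E) (fun _ ↦ real_inner_self_nonneg) hnonneg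
  exact eqOn_zero_of_inner_deriv_nonneg hf.continuousOn hf.hasDerivAt hint fun x hx ↦
    hbdry.trans (hmono self_mem_Ici hx.le hx.le)

lemma inner_map_deriv_deriv_eq_zero (hf : HasTwoDerivsOnIci f f' f'' a)
    (hint : IntegrableOn (fun x ↦ ‖f x‖ ^ 2) (Ioi a)) {m : ℝ}
    (hm : ∀ x, a < x → m * ‖f x‖ ^ 2 ≤ ⟪f x, f'' x⟫_ℝ) {A : E →L[ℝ] E}
    (hA : ∀ v, 0 ≤ ⟪v, A v⟫_ℝ) (hbdry : 0 ≤ ⟪f a, A (f' a)⟫_ℝ)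
    (hAf : ∀ x, a < x → 0 ≤ ⟪f x, A (f'' x)⟫_ℝ) {x : ℝ} (hx : a < x) :
    ⟪f x, A (f'' x)⟫_ℝ = 0 := by
  have hmono := hf.monotoneOn_inner_map_deriv hA hAf
  have hintegrable := hf.integrableOn_inner_map_deriv hint (hf.integrableOn_sq_norm_deriv hint hm) A
  have hzero {y : ℝ} (hy : a ≤ y) : ⟪f y, A (f' y)⟫_ℝ = 0 :=
    (nonpos_of_monotoneOn_of_integrableOn_Ioi hmono hintegrable hy).antisymm
      (hbdry.trans (hmono self_mem_Ici hy hy))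
  have heventually : (fun y ↦ ⟪f y, A (f' y)⟫_ℝ) =ᶠ[𝓝 x] fun _ ↦ 0 :=
    eventually_of_mem (Ioi_mem_nhds hx) fun y hy ↦ hzero (le_of_lt hy)
  have hsum := (hf.hasDerivAt_inner_map_deriv A hx).unique
    ((hasDerivAt_const x (0 : ℝ)).congr_of_eventuallyEq heventually)
  linarith [hAf x hx, hA (f' x)]

end HasTwoDerivsOnIci

end InnerProductSpace

section Schrodinger

variable {V ψ φ : ℝ → ℂ} {lam : ℂ} {a m n : ℝ}

lemma real_inner_mul_self_right (z w : ℂ) : ⟪z, w * z⟫_ℝ = w.re * ‖z‖ ^ 2 := by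
  rw [Complex.inner, mul_assoc, Complex.mul_conj, Complex.re_mul_ofReal, Complex.normSq_eq_norm_sq]

theorem exists_re_potential_lt_re_eigenvalue
    (hψ : HasTwoDerivsOnIci ψ φ (fun x ↦ (V x - lam) * ψ x) a) (hne : ∃ x, a ≤ x ∧ ψ x ≠ 0)
    (hint : IntegrableOn (fun x ↦ ‖ψ x‖ ^ 2) (Ioi a)) (hbdry : 0 ≤ (conj (ψ a) * φ a).re) :
    ∃ x, a < x ∧ (V x).re < lam.re := by
  by_contra! hre
  obtain ⟨y, hy, hψy⟩ := hne
  have hinner : 0 ≤ ⟪ψ a, φ a⟫_ℝ := by rwa [Complex.inner, mul_comm]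
  refine hψy (hψ.eqOn_zero_of_inner_deriv_deriv_nonneg hint hinner (fun x hx ↦ ?_) hy)
  rw [real_inner_mul_self_right, Complex.sub_re]
  exact mul_nonneg (sub_nonneg.2 (hre x hx)) (sq_nonneg _)

theorem exists_im_potential_le_im_eigenvalue
    (hψ : HasTwoDerivsOnIci ψ φ (fun x ↦ (V x - lam) * ψ x) a) (hne : ∃ x, a ≤ x ∧ ψ x ≠ 0)
    (hint : IntegrableOn (fun x ↦ ‖ψ x‖ ^ 2) (Ioi a)) (hbdry : 0 ≤ (conj (ψ a) * φ a).im)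
    (hm : ∀ x, a < x → m ≤ (V x).re) : ∃ x, a < x ∧ (V x).im ≤ lam.im := by
  by_contra! him
  -- Multiplication by `-i` extracts the imaginary part: `⟪z, A w⟫ = Im (conj z * w)`.
  let A : ℂ →L[ℝ] ℂ := .mul ℝ ℂ (-Complex.I)
  have hA_mul_self (z w : ℂ) : ⟪z, A (w * z)⟫_ℝ = w.im * ‖z‖ ^ 2 := by
    change ⟪z, -Complex.I * (w * z)⟫_ℝ = _
    rw [← mul_assoc, real_inner_mul_self_right]
    simp
  have hA (z : ℂ) : 0 ≤ ⟪z, A z⟫_ℝ := by simpa using (hA_mul_self z 1).ge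
  have hinner : 0 ≤ ⟪ψ a, A (φ a)⟫_ℝ := by
    change 0 ≤ ⟪ψ a, -Complex.I * φ a⟫_ℝ
    rwa [Complex.inner, mul_assoc, neg_mul, Complex.neg_re, Complex.I_mul_re, neg_neg, mul_comm]
  have hbelow (x : ℝ) (hx : a < x) :
      (m - lam.re) * ‖ψ x‖ ^ 2 ≤ ⟪ψ x, (V x - lam) * ψ x⟫_ℝ := by
    rw [real_inner_mul_self_right, Complex.sub_re]
    gcongr
    exact hm x hx
  have hgap (x : ℝ) (hx : a < x) : 0 < (V x - lam).im := by simpa using him x hx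
  have hzero : EqOn ψ 0 (Ioi a) := fun x hx ↦ by
    have hprod := hψ.inner_map_deriv_deriv_eq_zero hint hbelow hA hinner
      (fun y hy ↦ (hA_mul_self _ _).symm ▸ mul_nonneg (hgap y hy).le (sq_nonneg _)) hx
    rw [hA_mul_self] at hprod
    simpa using (mul_eq_zero.1 hprod).resolve_left (hgap x hx).ne'
  obtain ⟨y, hy, hψy⟩ := hne
  exact hψy (hzero.of_subset_closure hψ.continuousOn continuousOn_const Ioi_subset_Ici_self
    (closure_Ioi a).ge hy)

/-- Dirichlet and Neumann conditions satisfy `hbdry_re` and `hbdry_im`, as do Robin conditions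
`ψ' a = h * ψ a` with `0 ≤ h.re` and `0 ≤ h.im`. -/
theorem halfline_eigenvalue_pos_general (hne : ∃ x, a ≤ x ∧ ψ x ≠ 0)
    (hsmooth : ContDiffOn ℝ 2 ψ (Ici a))
    (hbdry_re : 0 ≤ (conj (ψ a) * derivWithin ψ (Ici a) a).re)
    (hbdry_im : 0 ≤ (conj (ψ a) * derivWithin ψ (Ici a) a).im)
    (hint : IntegrableOn (fun x ↦ ‖ψ x‖ ^ 2) (Ioi a))
    (hVre : ∀ x, a < x → m ≤ (V x).re) (hVim : ∀ x, a < x → n < (V x).im)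
    (heq : ∀ x, a < x →
      -(derivWithin (derivWithin ψ (Ici a)) (Ici a) x) + V x * ψ x = lam * ψ x) :
    m < lam.re ∧ n < lam.im := by
  have hψ : HasTwoDerivsOnIci ψ (derivWithin ψ (Ici a)) (fun x ↦ (V x - lam) * ψ x) a :=
    (HasTwoDerivsOnIci.of_contDiffOn hsmooth).congr_deriv_deriv fun x hx ↦ by
      linear_combination -heq x hx
  obtain ⟨x, hx, hre⟩ := exists_re_potential_lt_re_eigenvalue hψ hne hint hbdry_re
  obtain ⟨y, hy, him⟩ := exists_im_potential_le_im_eigenvalue hψ hne hint hbdry_im hVre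
  exact ⟨(hVre x hx).trans_lt hre, (hVim y hy).trans_le him⟩

end Schrodinger

/-- Eigenvalues of the half-line Dirichlet operator `H₊ = p² + i x³` on `(0,∞)`
have positive real and imaginary parts. Derivatives are one-sided at `x = 0`
(taken within `[0,∞)`). -/
theorem halfline_eigenvalue_pos (lam : ℂ) (ψ : ℝ → ℂ)
    (hne : ∃ x : ℝ, 0 ≤ x ∧ ψ x ≠ 0)
    (hsmooth : ContDiffOn ℝ 2 ψ (Ici 0))
    (hbc : ψ 0 = 0)
    (hint : IntegrableOn (fun x : ℝ => ‖ψ x‖ ^ 2) (Ioi 0))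
    (heq : ∀ x : ℝ, 0 ≤ x →
      -(derivWithin (derivWithin ψ (Ici 0)) (Ici 0) x)
          + Complex.I * (x : ℂ) ^ 3 * ψ x = lam * ψ x) :
    0 < lam.re ∧ 0 < lam.im :=
  halfline_eigenvalue_pos_general (a := 0) (V := fun x ↦ Complex.I * x ^ 3) hne hsmooth
    (by simp [hbc]) (by simp [hbc]) hint (fun x _ ↦ by simp [← Complex.ofReal_pow])
    (fun x hx ↦ by simpa [← Complex.ofReal_pow] using pow_pos hx 3) fun x hx ↦ heq x hx.le
end

section
/- Let f be a standard solution family and set α = e^{iπ/10}. Then for every λ ∈ ℂ with Im λ > 0 one has f(0, −α²·λ) ≠ 0 and |f(0, −α^{−2}·λ)| < |f(0, −α²·λ)|. (Equivalently, the function h(λ) = ψ₊(0,λ)/ψ₋(0,λ) satisfies |h(λ)| < 1 on the open upper half-plane.) -/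
open Complex

/-- `f : ℂ × ℂ → ℂ` is a standard solution family for `f'' = (z³ + λ) f`:
for each `λ` the map `z ↦ f(z,λ)` is entire and solves the ODE, and it has the
Liouville–Green asymptotics `f(z,λ) = z^{-3/4} e^{-(2/5) z^{5/2}} (1 + O(z^{-1/2}))`
as `z → ∞` in the sector `|arg z| ≤ 3π/5 - ε`, uniformly for `λ` in compact sets. -/
def IsStdSolutionFamily (f : ℂ → ℂ → ℂ) : Prop :=
  (∀ lam : ℂ, Differentiable ℂ (fun z => f z lam) ∧
    ∀ z : ℂ, deriv (deriv (fun w => f w lam)) z = (z ^ 3 + lam) * f z lam) ∧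
  (∀ ε > (0 : ℝ), ∀ L : Set ℂ, IsCompact L →
    ∃ C > (0 : ℝ), ∃ R > (0 : ℝ), ∀ lam ∈ L, ∀ z : ℂ,
      R ≤ ‖z‖ → |Complex.arg z| ≤ 3 * Real.pi / 5 - ε →
      ‖f z lam * z ^ ((3 : ℂ) / 4) *
          Complex.exp ((2 / 5 : ℂ) * z ^ ((5 : ℂ) / 2)) - 1‖
        ≤ C * ‖z‖ ^ (-(1 / 2) : ℝ))

/-! `D lam = f 0 lam` behaves like a product `∏ (1 + lam / e)` with all `e > 0`, so on each circle
centred at `0` its modulus increases with `lam.re`. The points `-α ^ 2 * lam` and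
`-(α ^ 2)⁻¹ * lam` lie on one circle, and their real parts differ by `2 * (α ^ 2).im * lam.im`.

Instead of a Hadamard factorisation, two limits are used: `D lam` is the limit, as `X → ∞`, of
rescaled values `φ_lam X` of the solution with `φ_lam 0 = 0` and `φ_lam' 0 = 1`, and `φ_lam X` is a
limit of symplectic Euler schemes, which are polynomials in `lam` with negative roots by an energy
argument. The monotonicity on circles is made quantitative so that it survives both limits and is
still strict: its gap is governed by `‖D 0‖ < ‖D r‖`, a consequence of Sturm comparison. -/

open Filter Topology Set ComplexConjugate

section ProductInequalities

variable {R : Type*} [CommRing R] [LinearOrder R] [IsStrictOrderedRing R] {s : Multiset R}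

lemma one_add_sum_le_prod_one_add (hs : ∀ t ∈ s, 0 ≤ t) :
    1 + s.sum ≤ (s.map (1 + ·)).prod := by
  induction s using Multiset.induction_on with
  | empty => simp
  | cons a s ih =>
    obtain ⟨ha, hs⟩ := Multiset.forall_mem_cons.1 hs
    simp only [Multiset.sum_cons, Multiset.map_cons, Multiset.prod_cons]
    calc 1 + (a + s.sum) ≤ (1 + a) * (1 + s.sum) := by
          linarith [mul_nonneg ha (Multiset.sum_nonneg hs)]
      _ ≤ (1 + a) * (s.map (1 + ·)).prod := by gcongr; exact ih hs

lemma one_sub_sum_le_prod_one_sub (hs : ∀ t ∈ s, 0 ≤ t ∧ t ≤ 1) :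
    1 - s.sum ≤ (s.map (1 - ·)).prod := by
  induction s using Multiset.induction_on with
  | empty => simp
  | cons a s ih =>
    obtain ⟨⟨ha₀, ha₁⟩, hs⟩ := Multiset.forall_mem_cons.1 hs
    simp only [Multiset.sum_cons, Multiset.map_cons, Multiset.prod_cons]
    calc 1 - (a + s.sum) ≤ (1 - a) * (1 - s.sum) := by
          linarith [mul_nonneg ha₀ (Multiset.sum_nonneg fun t ht => (hs t ht).1)]
      _ ≤ (1 - a) * (s.map (1 - ·)).prod :=
        mul_le_mul_of_nonneg_left (ih hs) (sub_nonneg.2 ha₁)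

lemma one_add_mul_one_sub_prod_le {c : R} (hc : 0 ≤ c) (hs : ∀ t ∈ s, 0 ≤ t ∧ t ≤ 1) :
    1 + c * (1 - (s.map (1 - ·)).prod) ≤ (s.map (1 + c * ·)).prod :=
  calc 1 + c * (1 - (s.map (1 - ·)).prod) ≤ 1 + c * s.sum := by
        gcongr; linarith [one_sub_sum_le_prod_one_sub hs]
    _ = 1 + (s.map (c * ·)).sum := by rw [Multiset.sum_map_mul_left, Multiset.map_id']
    _ ≤ ((s.map (c * ·)).map (1 + ·)).prod := one_add_sum_le_prod_one_add fun _ hmem => by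
        obtain ⟨t, ht, rfl⟩ := Multiset.mem_map.1 hmem
        exact mul_nonneg hc (hs t ht).1
    _ = (s.map (1 + c * ·)).prod := by rw [Multiset.map_map]; rfl

lemma prod_le_of_mem_of_le_one (hs : ∀ t ∈ s, 0 ≤ t ∧ t ≤ 1) {a : R} (ha : a ∈ s) :
    s.prod ≤ a := by
  obtain ⟨s, rfl⟩ := Multiset.exists_cons_of_mem ha
  obtain ⟨⟨ha₀, -⟩, hs⟩ := Multiset.forall_mem_cons.1 hs
  rw [Multiset.prod_cons]
  refine mul_le_of_le_one_right ha₀ ?_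
  simpa using Multiset.prod_map_le_prod_map₀ id (fun _ => (1 : R)) (fun t ht => (hs t ht).1)
    fun t ht => (hs t ht).2

end ProductInequalities

/-- A quantitative form of the property that `‖F‖` increases with the real part along every circle
centred at `0`. It is satisfied by products `∏ (lam + e)` with all `e > 0`, and, having no division
and no strict inequality, it passes to pointwise limits; the term carrying `ν.re - μ.re` keeps track
of how strict the growth is. -/
def IsCircleMonotone (F : ℂ → ℂ) : Prop :=
  ∀ ⦃r : ℝ⦄ ⦃μ ν : ℂ⦄, 0 < r → ‖μ‖ = r → ‖ν‖ = r → μ.re ≤ ν.re →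
    ‖F μ‖ ^ 2 * (r * ‖F r‖ ^ 2 + 2 * (ν.re - μ.re) * ‖F 0‖ * (‖F r‖ - ‖F 0‖)) ≤
      ‖F ν‖ ^ 2 * (r * ‖F r‖ ^ 2)

namespace IsCircleMonotone

variable {F : ℂ → ℂ}

lemma const_mul (hF : IsCircleMonotone F) (c : ℂ) : IsCircleMonotone fun z => c * F z := by
  intro r μ ν hr hμ hν hre
  have h := mul_le_mul_of_nonneg_left (hF hr hμ hν hre) (by positivity : 0 ≤ ‖c‖ ^ 4)
  simp only [norm_mul]
  linarith

lemma of_tendsto {ι : Type*} {l : Filter ι} [l.NeBot] {G : ι → ℂ → ℂ}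
    (hG : ∀ᶠ i in l, IsCircleMonotone (G i)) (hlim : ∀ z, Tendsto (G · z) l (𝓝 (F z))) :
    IsCircleMonotone F := by
  intro r μ ν hr hμ hν hre
  have T (z : ℂ) := (hlim z).norm
  refine le_of_tendsto_of_tendsto
    (((T μ).pow 2).mul ((((T r).pow 2).const_mul r).add
      (((T 0).const_mul (2 * (ν.re - μ.re))).mul ((T r).sub (T 0)))))
    (((T ν).pow 2).mul (((T r).pow 2).const_mul r)) ?_
  filter_upwards [hG] with i hi using hi hr hμ hν hre

lemma norm_lt_norm (hF : IsCircleMonotone F) {r : ℝ} {μ ν : ℂ} (hr : 0 < r) (hμ : ‖μ‖ = r)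
    (hν : ‖ν‖ = r) (hre : μ.re < ν.re) (h0 : F 0 ≠ 0) (h0r : ‖F 0‖ < ‖F r‖) (hFν : F ν ≠ 0) :
    ‖F μ‖ < ‖F ν‖ := by
  by_contra! hle
  have posμ : 0 < ‖F μ‖ := (norm_pos_iff.2 hFν).trans_le hle
  have gain : 0 < ‖F μ‖ ^ 2 * (2 * (ν.re - μ.re) * ‖F 0‖ * (‖F r‖ - ‖F 0‖)) := by
    have := sub_pos.2 hre
    have := sub_pos.2 h0r
    positivity
  have hle' : ‖F ν‖ ^ 2 * (r * ‖F r‖ ^ 2) ≤ ‖F μ‖ ^ 2 * (r * ‖F r‖ ^ 2) := by gcongr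
  linarith [hF hr hμ hν hre.le]

end IsCircleMonotone

section NegativeRoots

lemma sq_norm_add_ofReal (z : ℂ) (e : ℝ) : ‖z + e‖ ^ 2 = ‖z‖ ^ 2 + 2 * e * z.re + e ^ 2 := by
  simp only [← Complex.normSq_eq_norm_sq, Complex.normSq_add, Complex.normSq_ofReal,
    Complex.conj_ofReal, Complex.re_mul_ofReal]
  ring

lemma sq_norm_add_mul_le {μ ν : ℂ} {r e q : ℝ} (hr : 0 < r) (hμ : ‖μ‖ = r) (hν : ‖ν‖ = r)
    (hre : μ.re ≤ ν.re) (he : 0 < e) (hq₀ : 0 ≤ q) (hq : q ≤ 1 - r / (e + r)) :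
    ‖μ + e‖ ^ 2 * (1 + 2 * (ν.re - μ.re) / r * q * (r / (e + r))) ≤ ‖ν + e‖ ^ 2 := by
  have : 0 ≤ ν.re - μ.re := sub_nonneg.2 hre
  have hμe : ‖μ + e‖ ^ 2 ≤ (e + r) ^ 2 := by
    gcongr
    simpa [hμ, abs_of_pos he, add_comm] using norm_add_le μ (e : ℂ)
  have hqe : q * (e + r) ≤ e := by
    have := mul_le_mul_of_nonneg_right hq (by positivity : 0 ≤ e + r)
    rwa [sub_mul, div_mul_cancel₀ _ (by positivity), one_mul, add_sub_cancel_right] at this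
  calc ‖μ + e‖ ^ 2 * (1 + 2 * (ν.re - μ.re) / r * q * (r / (e + r)))
      = ‖μ + e‖ ^ 2 + ‖μ + e‖ ^ 2 * (2 * (ν.re - μ.re) * q / (e + r)) := by field_simp
    _ ≤ ‖μ + e‖ ^ 2 + (e + r) ^ 2 * (2 * (ν.re - μ.re) * q / (e + r)) := by gcongr
    _ = ‖μ + e‖ ^ 2 + 2 * (ν.re - μ.re) * (q * (e + r)) := by field_simp
    _ ≤ ‖μ + e‖ ^ 2 + 2 * (ν.re - μ.re) * e := by gcongr
    _ = ‖ν + e‖ ^ 2 := by rw [sq_norm_add_ofReal, sq_norm_add_ofReal, hμ, hν]; ring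

lemma prod_sq_norm_add_mul_le {s : Multiset ℝ} (hs : ∀ e ∈ s, 0 < e) {μ ν : ℂ} {r q : ℝ}
    (hr : 0 < r) (hμ : ‖μ‖ = r) (hν : ‖ν‖ = r) (hre : μ.re ≤ ν.re)
    (hq : q = (s.map fun e => 1 - r / (e + r)).prod) :
    (s.map fun e : ℝ => ‖μ + e‖ ^ 2).prod * (1 + 2 * (ν.re - μ.re) / r * q * (1 - q)) ≤
      (s.map fun e : ℝ => ‖ν + e‖ ^ 2).prod := by
  have ht : ∀ t ∈ s.map (fun e => r / (e + r)), 0 ≤ t ∧ t ≤ 1 := fun t ht => by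
    obtain ⟨e, he, rfl⟩ := Multiset.mem_map.1 ht
    have := hs e he
    exact ⟨by positivity, (div_le_one (by positivity)).2 (by linarith)⟩
  have hfactor : ∀ t ∈ s.map (fun e => 1 - r / (e + r)), 0 ≤ t ∧ t ≤ 1 := fun t hmem => by
    obtain ⟨e, he, rfl⟩ := Multiset.mem_map.1 hmem
    have := ht _ (Multiset.mem_map_of_mem _ he)
    constructor <;> linarith
  have hq₀ : 0 ≤ q := hq ▸ Multiset.prod_nonneg fun t ht => (hfactor t ht).1
  have hqe : ∀ e ∈ s, q ≤ 1 - r / (e + r) := fun e he =>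
    hq ▸ prod_le_of_mem_of_le_one hfactor (Multiset.mem_map_of_mem _ he)
  have : 0 ≤ ν.re - μ.re := sub_nonneg.2 hre
  have hgain := one_add_mul_one_sub_prod_le
    (by positivity : 0 ≤ 2 * (ν.re - μ.re) / r * q) ht
  simp only [Multiset.map_map, Function.comp_def, ← hq] at hgain
  refine (mul_le_mul_of_nonneg_left hgain ?_).trans ?_
  · exact Multiset.prod_nonneg fun t ht => by
      obtain ⟨e, -, rfl⟩ := Multiset.mem_map.1 ht
      positivity
  · rw [← Multiset.prod_map_mul]
    refine Multiset.prod_map_le_prod_map₀ _ _ (fun e he => ?_) fun e he =>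
      sq_norm_add_mul_le hr hμ hν hre (hs e he) hq₀ (hqe e he)
    have := hs e he
    positivity

lemma isCircleMonotone_prod_add {s : Multiset ℝ} (hs : ∀ e ∈ s, 0 < e) :
    IsCircleMonotone fun z => (s.map fun e : ℝ => z + e).prod := by
  intro r μ ν hr hμ hν hre
  have hnorm (z : ℂ) : ‖(s.map fun e : ℝ => z + e).prod‖ = (s.map fun e : ℝ => ‖z + e‖).prod := by
    simpa using map_multiset_prod (normHom : ℂ →*₀ ℝ) (s.map fun e : ℝ => z + e)
  have hsq (z : ℂ) :
      ‖(s.map fun e : ℝ => z + e).prod‖ ^ 2 = (s.map fun e : ℝ => ‖z + e‖ ^ 2).prod := by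
    rw [hnorm, Multiset.prod_map_pow]
  have hreal {x : ℝ} (hx : 0 ≤ x) :
      ‖(s.map fun e : ℝ => (x : ℂ) + e).prod‖ = (s.map fun e => x + e).prod := by
    rw [hnorm]
    refine congr_arg _ (Multiset.map_congr rfl fun e he => ?_)
    have := hs e he
    rw [← Complex.ofReal_add, Complex.norm_of_nonneg (by positivity)]
  set p := (s.map fun e => r + e).prod
  set z := (s.map fun e => 0 + e).prod
  have hp : 0 < p := Multiset.prod_pos fun x hx => by
    obtain ⟨e, he, rfl⟩ := Multiset.mem_map.1 hx
    have := hs e he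
    positivity
  have hq : z / p = (s.map fun e => 1 - r / (e + r)).prod := by
    rw [← Multiset.prod_map_div]
    refine congr_arg _ (Multiset.map_congr rfl fun e he => ?_)
    have := hs e he
    field_simp
    ring
  have h := mul_le_mul_of_nonneg_right (prod_sq_norm_add_mul_le hs hr hμ hν hre hq)
    (by positivity : 0 ≤ r * p ^ 2)
  have h0 := hreal le_rfl
  rw [Complex.ofReal_zero] at h0
  simp only [hsq μ, hsq ν, hreal hr.le, h0]
  have hexpand : r * p ^ 2 + 2 * (ν.re - μ.re) * z * (p - z) =
      (1 + 2 * (ν.re - μ.re) / r * (z / p) * (1 - z / p)) * (r * p ^ 2) := by field_simp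
  rwa [hexpand, ← mul_assoc]

lemma isCircleMonotone_eval {P : Polynomial ℂ} (hP : ∀ z, P.IsRoot z → z.im = 0 ∧ z.re < 0) :
    IsCircleMonotone fun z => P.eval z := by
  have hroot : ∀ z ∈ P.roots, z.im = 0 ∧ z.re < 0 := fun z hz =>
    hP z (Polynomial.isRoot_of_mem_roots hz)
  have hfactor : (fun z => P.eval z) = fun z : ℂ =>
      P.leadingCoeff * ((P.roots.map fun ρ => -ρ.re).map fun e : ℝ => z + (e : ℂ)).prod := by
    funext z
    rw [(IsAlgClosed.splits P).eval_eq_prod_roots, Multiset.map_map]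
    congr 2
    refine Multiset.map_congr rfl fun ρ hρ => ?_
    apply Complex.ext <;> simp [(hroot ρ hρ).1, sub_eq_add_neg]
  rw [hfactor]
  refine (isCircleMonotone_prod_add fun e he => ?_).const_mul _
  obtain ⟨ρ, hρ, rfl⟩ := Multiset.mem_map.1 he
  exact neg_pos.2 (hroot ρ hρ).2

end NegativeRoots

section SymplecticEuler

/-- The pairs `(uₖ, vₖ)` approximating `(u (h k), u' (h k))` for `u'' = q u`, `u 0 = 0`, `u' 0 = 1`,
where `q k` samples the potential at `h k`. The new slope `vₖ₊₁` is used in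
`uₖ₊₁ = uₖ + h vₖ₊₁`: with this (symplectic) choice the energy argument of
`symplecticEuler_fst_ne_zero` is exact for every step size. -/
def symplecticEuler {R : Type*} [CommRing R] (h : R) (q : ℕ → R) : ℕ → R × R
  | 0 => (0, 1)
  | k + 1 =>
    let s := symplecticEuler h q k
    (s.1 + h * (s.2 + h * q k * s.1), s.2 + h * q k * s.1)

variable {R S : Type*} [CommRing R] [CommRing S]

lemma symplecticEuler_succ_snd (h : R) (q : ℕ → R) (k : ℕ) :
    (symplecticEuler h q (k + 1)).2 =
      (symplecticEuler h q k).2 + h * q k * (symplecticEuler h q k).1 :=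
  rfl

lemma symplecticEuler_succ_fst (h : R) (q : ℕ → R) (k : ℕ) :
    (symplecticEuler h q (k + 1)).1 =
      (symplecticEuler h q k).1 + h * (symplecticEuler h q (k + 1)).2 :=
  rfl

lemma map_symplecticEuler (φ : R →+* S) (h : R) (q : ℕ → R) (k : ℕ) :
    Prod.map φ φ (symplecticEuler h q k) = symplecticEuler (φ h) (fun j => φ (q j)) k := by
  induction k with
  | zero => simp [symplecticEuler]
  | succ k ih => simp [symplecticEuler, ← ih]

lemma mul_le_symplecticEuler [LinearOrder R] [IsStrictOrderedRing R] {h : R} (hh : 0 ≤ h)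
    {q : ℕ → R} (hq : ∀ k, 0 ≤ q k) (k : ℕ) :
    h * k ≤ (symplecticEuler h q k).1 ∧ 1 ≤ (symplecticEuler h q k).2 := by
  induction k with
  | zero => simp [symplecticEuler]
  | succ k ih =>
    obtain ⟨hu, hv⟩ := ih
    have hu₀ : 0 ≤ (symplecticEuler h q k).1 := le_trans (by positivity) hu
    have hv' : 1 ≤ (symplecticEuler h q (k + 1)).2 := by
      rw [symplecticEuler_succ_snd]
      linarith [mul_nonneg (mul_nonneg hh (hq k)) hu₀]
    refine ⟨?_, hv'⟩
    rw [symplecticEuler_succ_fst]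
    push_cast
    linarith [mul_le_mul_of_nonneg_left hv' hh]

-- The discrete energy `Re (c vₖ ūₖ)` grows by `h Re (c qₖ) |uₖ|² + h (Re c) |vₖ₊₁|²` at each step.
lemma symplecticEuler_fst_ne_zero {h : ℝ} (hh : 0 < h) {q : ℕ → ℂ} {c : ℂ} (hc : 0 < c.re)
    (hq : ∀ k, 0 ≤ (c * q k).re) {k : ℕ} (hk : k ≠ 0) : (symplecticEuler (h : ℂ) q k).1 ≠ 0 := by
  set u : ℕ → ℂ := fun k => (symplecticEuler (h : ℂ) q k).1
  set v : ℕ → ℂ := fun k => (symplecticEuler (h : ℂ) q k).2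
  set energy : ℕ → ℝ := fun k => (c * v k * conj (u k)).re
  have hstep (k : ℕ) : energy (k + 1) =
      energy k + h * (c * q k).re * normSq (u k) + h * c.re * normSq (v (k + 1)) := by
    have hu : u (k + 1) = u k + h * v (k + 1) := rfl
    have hv : v (k + 1) = v k + h * q k * u k := rfl
    have hsplit : c * v (k + 1) * conj (u (k + 1)) = c * v k * conj (u k) +
        h * (normSq (u k) : ℂ) * (c * q k) + h * (normSq (v (k + 1)) : ℂ) * c := by
      rw [hu, map_add, map_mul, conj_ofReal, normSq_eq_conj_mul_self, normSq_eq_conj_mul_self, hv]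
      ring
    simp only [energy, hsplit, add_re, ← ofReal_mul, re_ofReal_mul]
    ring
  have hmono (k : ℕ) : energy k ≤ energy (k + 1) := by
    rw [hstep]
    linarith [mul_nonneg (mul_nonneg hh.le (hq k)) (normSq_nonneg (u k)),
      mul_nonneg (mul_nonneg hh.le hc.le) (normSq_nonneg (v (k + 1)))]
  have hpos : 0 < energy k := by
    refine lt_of_lt_of_le ?_ (monotone_nat_of_le_succ hmono (Nat.one_le_iff_ne_zero.2 hk))
    simp [energy, u, v, symplecticEuler, hh, hc]
  intro huk
  simp [energy, u, huk] at hpos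

lemma exists_re_pos_re_mul_nonneg {lam : ℂ} (hlam : lam.im ≠ 0 ∨ 0 ≤ lam.re) :
    ∃ c : ℂ, 0 < c.re ∧ 0 ≤ (c * lam).re := by
  by_cases hre : 0 ≤ lam.re
  · exact ⟨1, by simp, by simpa⟩
  · have hlt := (abs_lt.1 (abs_re_lt_norm.2 (hlam.resolve_right hre))).1
    refine ⟨conj lam + ‖lam‖, by rw [add_re, conj_re, ofReal_re]; linarith, ?_⟩
    have h : (conj lam + ‖lam‖) * lam = ((‖lam‖ ^ 2 : ℝ) : ℂ) + ‖lam‖ * lam := by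
      rw [add_mul, conj_mul', ofReal_pow]
    rw [h, add_re, re_ofReal_mul, ofReal_re]
    linarith [mul_nonneg (norm_nonneg lam) (by linarith : 0 ≤ ‖lam‖ + lam.re)]

lemma exists_re_pos_re_mul_ofReal_add_nonneg {lam : ℂ} (hlam : lam.im ≠ 0 ∨ 0 ≤ lam.re) :
    ∃ c : ℂ, 0 < c.re ∧ ∀ a : ℝ, 0 ≤ a → 0 ≤ (c * (a + lam)).re := by
  obtain ⟨c, hc, hclam⟩ := exists_re_pos_re_mul_nonneg hlam
  refine ⟨c, hc, fun a ha => ?_⟩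
  rw [mul_add, add_re, re_mul_ofReal]
  positivity

lemma isCircleMonotone_symplecticEuler {h : ℝ} (hh : 0 < h) {a : ℕ → ℝ} (ha : ∀ k, 0 ≤ a k)
    {n : ℕ} (hn : n ≠ 0) :
    IsCircleMonotone fun lam => (symplecticEuler (h : ℂ) (fun k => a k + lam) n).1 := by
  set P : Polynomial ℂ :=
    (symplecticEuler (Polynomial.C (h : ℂ)) (fun k => Polynomial.C (a k : ℂ) + Polynomial.X) n).1
  have hP (lam : ℂ) : P.eval lam = (symplecticEuler (h : ℂ) (fun k => a k + lam) n).1 := by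
    have := congr_arg Prod.fst (map_symplecticEuler (Polynomial.evalRingHom lam)
      (Polynomial.C (h : ℂ)) (fun k => Polynomial.C (a k : ℂ) + Polynomial.X) n)
    simpa using this
  simp only [← hP]
  refine isCircleMonotone_eval fun lam hroot => ?_
  by_contra! hlam
  obtain ⟨c, hc, hcq⟩ := exists_re_pos_re_mul_ofReal_add_nonneg
    (show lam.im ≠ 0 ∨ 0 ≤ lam.re by tauto)
  exact symplecticEuler_fst_ne_zero hh hc (fun k => hcq _ (ha k)) hn ((hP lam).symm.trans hroot)

end SymplecticEuler

/-- `u` solves `u'' = q u` on the real line and `u'` is its derivative. -/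
structure IsODESolution {A : Type*} [NormedCommRing A] [NormedAlgebra ℝ A] (q u u' : ℝ → A) :
    Prop where
  hasDerivAt (x : ℝ) : HasDerivAt u (u' x) x
  hasDerivAt_deriv (x : ℝ) : HasDerivAt u' (q x * u x) x

/-- `u` is the solution of `u'' = q u` which vanishes at `0` and has slope `1` there. -/
structure IsDirichletSolution {A : Type*} [NormedCommRing A] [NormedAlgebra ℝ A]
    (q u u' : ℝ → A) : Prop extends IsODESolution q u u' where
  apply_zero : u 0 = 0
  deriv_zero : u' 0 = 1

section EulerConvergence

lemma exists_norm_sub_sub_smul_le {E : Type*} [NormedAddCommGroup E] [NormedSpace ℝ E]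
    {g g' : ℝ → E} (hg : ∀ x, HasDerivAt g (g' x) x) (hg' : Continuous g') (A B : ℝ) {ε : ℝ}
    (hε : 0 < ε) :
    ∃ δ > 0, ∀ a b m, A ≤ a → b ≤ B → m ∈ Icc a b → b - a < δ →
      ‖g b - g a - (b - a) • g' m‖ ≤ ε * (b - a) := by
  obtain ⟨δ, hδ, hunif⟩ := Metric.uniformContinuousOn_iff.1
    (isCompact_Icc.uniformContinuousOn_of_continuous (hg'.continuousOn (s := Icc A B))) ε hε
  refine ⟨δ, hδ, fun a b m ha hb hm hab => ?_⟩
  have hle : a ≤ b := hm.1.trans hm.2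
  have hderiv (x : ℝ) : HasDerivAt (fun x => g x - x • g' m) (g' x - g' m) x := by
    simpa using (hg x).fun_sub ((hasDerivAt_id x).smul_const (g' m))
  have hbound : ∀ x ∈ Icc a b, ‖g' x - g' m‖ ≤ ε := fun x hx => by
    rw [← dist_eq_norm]
    refine (hunif x ⟨ha.trans hx.1, hx.2.trans hb⟩ m ⟨ha.trans hm.1, hm.2.trans hb⟩ ?_).le
    rw [Real.dist_eq, abs_lt]
    constructor <;> linarith [hx.1, hx.2, hm.1, hm.2]
  have hmvt := (convex_Icc a b).norm_image_sub_le_of_norm_hasDerivWithin_le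
    (fun x _ => (hderiv x).hasDerivWithinAt) hbound (left_mem_Icc.2 hle) (right_mem_Icc.2 hle)
  rw [Real.norm_of_nonneg (sub_nonneg.2 hle)] at hmvt
  convert hmvt using 2
  module

lemma norm_symplecticEuler_step_sub_le {h K ε : ℝ} (hh₀ : 0 ≤ h) (hh₁ : h ≤ 1)
    {Q u v u₁ v₁ U V : ℂ} (hQ : ‖Q‖ ≤ K) (hv : ‖v₁ - v - h * (Q * u)‖ ≤ ε * h)
    (hu : ‖u₁ - u - h * v₁‖ ≤ ε * h) :
    ‖U + h * (V + h * Q * U) - u₁‖ + ‖V + h * Q * U - v₁‖ ≤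
      (1 + h * (2 * K + 1)) * (‖U - u‖ + ‖V - v‖) + 3 * (ε * h) := by
  have hnorm : ‖(h : ℂ)‖ = h := Complex.norm_of_nonneg hh₀
  have hV : ‖V + h * Q * U - v₁‖ ≤ ‖V - v‖ + h * (K * ‖U - u‖) + ε * h :=
    calc ‖V + h * Q * U - v₁‖ = ‖V - v + h * (Q * (U - u)) - (v₁ - v - h * (Q * u))‖ := by ring_nf
      _ ≤ ‖V - v‖ + ‖h * (Q * (U - u))‖ + ‖v₁ - v - h * (Q * u)‖ :=
        (norm_sub_le _ _).trans (by gcongr; exact norm_add_le _ _)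
      _ ≤ ‖V - v‖ + h * (K * ‖U - u‖) + ε * h := by
        rw [norm_mul, norm_mul, hnorm]
        gcongr
  have hU : ‖U + h * (V + h * Q * U) - u₁‖ ≤ ‖U - u‖ + h * ‖V + h * Q * U - v₁‖ + ε * h :=
    calc ‖U + h * (V + h * Q * U) - u₁‖
        = ‖U - u + h * (V + h * Q * U - v₁) - (u₁ - u - h * v₁)‖ := by ring_nf
      _ ≤ ‖U - u‖ + ‖h * (V + h * Q * U - v₁)‖ + ‖u₁ - u - h * v₁‖ :=
        (norm_sub_le _ _).trans (by gcongr; exact norm_add_le _ _)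
      _ ≤ ‖U - u‖ + h * ‖V + h * Q * U - v₁‖ + ε * h := by rw [norm_mul, hnorm]; gcongr
  have hK : 0 ≤ K := (norm_nonneg Q).trans hQ
  have hεh : 0 ≤ ε * h := (norm_nonneg _).trans hu
  linarith [mul_le_mul_of_nonneg_left hV hh₀, mul_nonneg hh₀ (norm_nonneg (U - u)),
    mul_nonneg (mul_nonneg hh₀ hK) (norm_nonneg (V - v)),
    mul_nonneg (sub_nonneg.2 hh₁) hεh,
    mul_nonneg (sub_nonneg.2 hh₁) (mul_nonneg hh₀ (mul_nonneg hK (norm_nonneg (U - u))))]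

lemma IsODESolution.exists_norm_consistency_le {q u u' : ℝ → ℂ} (hu : IsODESolution q u u')
    (hq : Continuous q) (X : ℝ) {ε : ℝ} (hε : 0 < ε) :
    ∃ δ > 0, ∀ a b, 0 ≤ a → a ≤ b → b ≤ X → b - a < δ →
      ‖u' b - u' a - ((b - a : ℝ) : ℂ) * (q a * u a)‖ ≤ ε * (b - a) ∧
        ‖u b - u a - ((b - a : ℝ) : ℂ) * u' b‖ ≤ ε * (b - a) := by
  have hcont : Continuous u := continuous_iff_continuousAt.2 fun x => (hu.hasDerivAt x).continuousAt
  have hcont' : Continuous u' :=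
    continuous_iff_continuousAt.2 fun x => (hu.hasDerivAt_deriv x).continuousAt
  obtain ⟨δ, hδ, hslope⟩ := exists_norm_sub_sub_smul_le hu.hasDerivAt_deriv (hq.mul hcont) 0 X hε
  obtain ⟨δ', hδ', hvalue⟩ := exists_norm_sub_sub_smul_le hu.hasDerivAt hcont' 0 X hε
  refine ⟨min δ δ', lt_min hδ hδ', fun a b ha hab hb hlt => ⟨?_, ?_⟩⟩
  · simpa using hslope a b a ha hb (left_mem_Icc.2 hab) (hlt.trans_le (min_le_left _ _))
  · simpa using hvalue a b b ha hb (right_mem_Icc.2 hab) (hlt.trans_le (min_le_right _ _))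

lemma le_of_discrete_gronwall_const {e : ℕ → ℝ} {b c : ℝ} (hb : 0 ≤ b) (hc : 0 ≤ c) {n : ℕ}
    (h0 : e 0 = 0) (he : ∀ k < n, e (k + 1) ≤ (1 + c) * e k + b) (hnonneg : ∀ k, 0 ≤ e k) :
    e n ≤ n * b * Real.exp (n * c) := by
  have h := discrete_gronwall (u := fun k => e (min k n)) (b := fun _ => b) (c := fun _ => c)
    (n₀ := 0) (hnonneg _) (fun k _ => ?_) (fun _ _ => hc) (fun _ _ => hb) n.zero_le
  · simpa [h0] using h
  · rcases lt_or_ge k n with hk | hk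
    · simpa [min_eq_left hk.le, min_eq_left (Nat.succ_le_of_lt hk)] using he k hk
    · simp only [min_eq_right hk, min_eq_right (hk.trans k.le_succ)]
      linarith [mul_nonneg hc (hnonneg n)]

lemma norm_symplecticEuler_sub_le {h K ε : ℝ} (hh₀ : 0 ≤ h) (hh₁ : h ≤ 1) (hK : 0 ≤ K)
    (hε : 0 ≤ ε) {Q u v : ℕ → ℂ} (hu₀ : u 0 = 0) (hv₀ : v 0 = 1) {n : ℕ}
    (hQ : ∀ k < n, ‖Q k‖ ≤ K) (hv : ∀ k < n, ‖v (k + 1) - v k - h * (Q k * u k)‖ ≤ ε * h)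
    (hu : ∀ k < n, ‖u (k + 1) - u k - h * v (k + 1)‖ ≤ ε * h) :
    ‖(symplecticEuler (h : ℂ) Q n).1 - u n‖ ≤
      n * (3 * (ε * h)) * Real.exp (n * (h * (2 * K + 1))) := by
  set U : ℕ → ℂ × ℂ := symplecticEuler (h : ℂ) Q
  have h0 : ‖(U 0).1 - u 0‖ + ‖(U 0).2 - v 0‖ = 0 := by simp [U, symplecticEuler, hu₀, hv₀]
  exact (le_add_of_nonneg_right (norm_nonneg _)).trans <|
    le_of_discrete_gronwall_const (e := fun k => ‖(U k).1 - u k‖ + ‖(U k).2 - v k‖)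
      (by positivity) (by positivity) h0
      (fun k hk => norm_symplecticEuler_step_sub_le hh₀ hh₁ (hQ k hk) (hv k hk) (hu k hk))
      fun k => by positivity

lemma IsDirichletSolution.exists_norm_symplecticEuler_sub_le {q u u' : ℝ → ℂ}
    (hu : IsDirichletSolution q u u') (hq : Continuous q) {X : ℝ} (hX : 0 ≤ X) :
    ∃ C, ∀ ε > 0, ∀ᶠ n : ℕ in atTop,
      ‖(symplecticEuler ((X / n : ℝ) : ℂ) (fun k => q (X / n * k)) n).1 - u X‖ ≤ ε * C := by
  obtain ⟨K, hK⟩ := (isCompact_Icc (a := (0 : ℝ)) (b := X)).exists_bound_of_continuousOn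
    hq.continuousOn
  have hK₀ : 0 ≤ K := (norm_nonneg _).trans (hK 0 ⟨le_rfl, hX⟩)
  refine ⟨3 * X * Real.exp (X * (2 * K + 1)), fun ε hε => ?_⟩
  obtain ⟨δ, hδ, hcons⟩ := hu.exists_norm_consistency_le hq X hε
  have hsmall := tendsto_const_div_atTop_nhds_zero_nat X
  filter_upwards [hsmall.eventually_lt_const hδ, hsmall.eventually_le_const one_pos,
    eventually_ne_atTop 0] with n hnδ hn₁ hn
  set h := X / n
  have hh₀ : 0 ≤ h := by positivity
  have hnh : n * h = X := mul_div_cancel₀ X (by exact_mod_cast hn)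
  have hgrid : ∀ k ≤ n, h * k ≤ X := fun k hk => by
    rw [← hnh, mul_comm]
    gcongr
  have hlocal : ∀ k < n,
      ‖u' (h * (k + 1 : ℕ)) - u' (h * k) - h * (q (h * k) * u (h * k))‖ ≤ ε * h ∧
        ‖u (h * (k + 1 : ℕ)) - u (h * k) - h * u' (h * (k + 1 : ℕ))‖ ≤ ε * h := fun k hk => by
    have hstep : h * (k + 1 : ℕ) - h * k = h := by push_cast; ring
    simpa only [hstep] using hcons (h * k) (h * (k + 1 : ℕ)) (by positivity) (by linarith)
      (hgrid (k + 1) hk) (by rwa [hstep])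
  have herr := norm_symplecticEuler_sub_le hh₀ hn₁ hK₀ hε.le (u := fun k => u (h * k))
    (v := fun k => u' (h * k)) (by simp [hu.apply_zero]) (by simp [hu.deriv_zero])
    (fun k hk => hK _ ⟨by positivity, hgrid k hk.le⟩) (fun k hk => (hlocal k hk).1)
    fun k hk => (hlocal k hk).2
  rw [mul_comm h, hnh] at herr
  refine herr.trans_eq ?_
  rw [← mul_assoc (n : ℝ) h, hnh, ← hnh]
  ring

lemma IsDirichletSolution.tendsto_symplecticEuler {q u u' : ℝ → ℂ}
    (hu : IsDirichletSolution q u u') (hq : Continuous q) {X : ℝ} (hX : 0 ≤ X) :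
    Tendsto (fun n : ℕ => (symplecticEuler ((X / n : ℝ) : ℂ) (fun k => q (X / n * k)) n).1) atTop
      (𝓝 (u X)) := by
  obtain ⟨C, hC⟩ := hu.exists_norm_symplecticEuler_sub_le hq hX
  refine Metric.tendsto_nhds.2 fun η hη => ?_
  filter_upwards [hC (η / (|C| + 1)) (by positivity)] with n hn
  rw [dist_eq_norm]
  calc _ ≤ η / (|C| + 1) * C := hn
    _ ≤ η / (|C| + 1) * |C| := by gcongr; exact le_abs_self C
    _ < η / (|C| + 1) * (|C| + 1) := by gcongr; exact lt_add_one _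
    _ = η := div_mul_cancel₀ _ (by positivity)

end EulerConvergence

section Wronskian

variable {A : Type*} [NormedCommRing A] [NormedAlgebra ℝ A] {p q u u' v v' : ℝ → A}

/-- The Wronskian `u v' - u' v`, with the derivatives `u'` and `v'` passed explicitly. -/
def wronskian (u u' v v' : ℝ → A) (x : ℝ) : A := u x * v' x - u' x * v x

lemma IsODESolution.hasDerivAt_wronskian (hu : IsODESolution q u u') (hv : IsODESolution p v v')
    (x : ℝ) : HasDerivAt (wronskian u u' v v') ((p x - q x) * (u x * v x)) x := by
  refine (((hu.hasDerivAt x).mul (hv.hasDerivAt_deriv x)).sub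
    ((hu.hasDerivAt_deriv x).mul (hv.hasDerivAt x))).congr_deriv ?_
  ring

lemma IsODESolution.wronskian_eq (hu : IsODESolution q u u') (hv : IsODESolution q v v')
    (x y : ℝ) : wronskian u u' v v' x = wronskian u u' v v' y :=
  is_const_of_deriv_eq_zero (fun x => (hu.hasDerivAt_wronskian hv x).differentiableAt)
    (fun x => by simp [(hu.hasDerivAt_wronskian hv x).deriv]) x y

lemma hasDerivAt_div_wronskian {𝕜 : Type*} [NontriviallyNormedField 𝕜] [NormedAlgebra ℝ 𝕜]
    {u u' v v' : ℝ → 𝕜} {x : ℝ} (hu : HasDerivAt u (u' x) x) (hv : HasDerivAt v (v' x) x)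
    (hux : u x ≠ 0) :
    HasDerivAt (fun x => v x / u x) (wronskian u u' v v' x / u x ^ 2) x := by
  refine (hv.fun_div hu hux).congr_deriv ?_
  rw [wronskian]
  ring

end Wronskian

section RealPotential

lemma IsODESolution.re {Q : ℝ → ℝ} {u u' : ℝ → ℂ} (hu : IsODESolution (fun x => (Q x : ℂ)) u u') :
    IsODESolution Q (fun x => (u x).re) fun x => (u' x).re where
  hasDerivAt x := reCLM.hasFDerivAt.comp_hasDerivAt x (hu.hasDerivAt x)
  hasDerivAt_deriv x := by
    simpa only [reCLM_apply, re_ofReal_mul, Function.comp_def] using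
      reCLM.hasFDerivAt.comp_hasDerivAt x (hu.hasDerivAt_deriv x)

lemma IsDirichletSolution.re {Q : ℝ → ℝ} {u u' : ℝ → ℂ}
    (hu : IsDirichletSolution (fun x => (Q x : ℂ)) u u') :
    IsDirichletSolution Q (fun x => (u x).re) fun x => (u' x).re where
  toIsODESolution := hu.toIsODESolution.re
  apply_zero := by simp [hu.apply_zero]
  deriv_zero := by simp [hu.deriv_zero]

lemma IsDirichletSolution.exists_ofReal_eq {Q : ℝ → ℝ} (hQ : Continuous Q)
    (hQ₀ : ∀ x, 0 ≤ x → 0 ≤ Q x) {u u' : ℝ → ℂ}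
    (hu : IsDirichletSolution (fun x => (Q x : ℂ)) u u') {X : ℝ} (hX : 0 ≤ X) :
    ∃ t, X ≤ t ∧ (t : ℂ) = u X := by
  have hclosed : IsClosed (((↑) : ℝ → ℂ) '' Ici X) :=
    isometry_ofReal.isClosedEmbedding.isClosedMap _ isClosed_Ici
  refine hclosed.mem_of_tendsto
    (hu.tendsto_symplecticEuler (continuous_ofReal.comp hQ) hX) ?_
  filter_upwards [eventually_ne_atTop 0] with n hn
  refine ⟨(symplecticEuler (X / n) (fun k => Q (X / n * k)) n).1, ?_, ?_⟩
  · have h := (mul_le_symplecticEuler (by positivity : 0 ≤ X / n)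
      (fun k => hQ₀ (X / n * k) (by positivity)) n).1
    rwa [div_mul_cancel₀ X (by exact_mod_cast hn)] at h
  · exact congr_arg Prod.fst (map_symplecticEuler ofRealHom _ _ n)

end RealPotential

section Comparison

variable {Q₁ Q₂ a a' b b' : ℝ → ℝ}

lemma IsDirichletSolution.wronskian_pos (ha : IsDirichletSolution Q₁ a a')
    (hb : IsDirichletSolution Q₂ b b') (hQ : ∀ x > 0, Q₁ x < Q₂ x) (ha₀ : ∀ x > 0, 0 < a x)
    (hb₀ : ∀ x > 0, 0 < b x) {x : ℝ} (hx : 0 < x) : 0 < wronskian a a' b b' x := by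
  have hderiv := ha.hasDerivAt_wronskian hb.toIsODESolution
  have hmono : StrictMonoOn (wronskian a a' b b') (Ici 0) := by
    refine strictMonoOn_of_hasDerivWithinAt_pos (convex_Ici 0)
      (fun x _ => (hderiv x).continuousAt.continuousWithinAt)
      (fun x _ => (hderiv x).hasDerivWithinAt) fun x hx => ?_
    rw [interior_Ici] at hx
    exact mul_pos (sub_pos.2 (hQ x hx)) (mul_pos (ha₀ x hx) (hb₀ x hx))
  simpa [wronskian, ha.apply_zero, hb.apply_zero] using hmono self_mem_Ici hx.le hx

lemma IsDirichletSolution.strictMonoOn_div (ha : IsDirichletSolution Q₁ a a')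
    (hb : IsDirichletSolution Q₂ b b') (hQ : ∀ x > 0, Q₁ x < Q₂ x) (ha₀ : ∀ x > 0, 0 < a x)
    (hb₀ : ∀ x > 0, 0 < b x) : StrictMonoOn (fun x => b x / a x) (Ioi 0) := by
  have hderiv : ∀ x > 0, HasDerivAt (fun x => b x / a x) (wronskian a a' b b' x / a x ^ 2) x :=
    fun x hx => hasDerivAt_div_wronskian (ha.hasDerivAt x) (hb.hasDerivAt x) (ha₀ x hx).ne'
  refine strictMonoOn_of_hasDerivWithinAt_pos (convex_Ioi 0)
    (fun x hx => (hderiv x hx).continuousAt.continuousWithinAt)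
    (fun x hx => (hderiv x (interior_subset hx)).hasDerivWithinAt) fun x hx => ?_
  have hx : 0 < x := interior_subset hx
  exact div_pos (ha.wronskian_pos hb hQ ha₀ hb₀ hx) (pow_pos (ha₀ x hx) 2)

lemma IsDirichletSolution.tendsto_div_nhdsGT_zero (ha : IsDirichletSolution Q₁ a a')
    (hb : IsDirichletSolution Q₂ b b') : Tendsto (fun x => b x / a x) (𝓝[>] 0) (𝓝 1) := by
  have hslope {Q u u' : ℝ → ℝ} (hu : IsDirichletSolution Q u u') :
      Tendsto (fun t => t⁻¹ * u t) (𝓝[>] 0) (𝓝 1) := by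
    simpa [hu.apply_zero, hu.deriv_zero] using (hu.hasDerivAt 0).tendsto_slope_zero_right
  have h := (hslope hb).div (hslope ha) one_ne_zero
  rw [div_one] at h
  refine h.congr' ?_
  filter_upwards [self_mem_nhdsWithin] with x hx
  exact mul_div_mul_left _ _ (inv_ne_zero (ne_of_gt hx))

lemma IsDirichletSolution.exists_one_lt_mul_le (ha : IsDirichletSolution Q₁ a a')
    (hb : IsDirichletSolution Q₂ b b') (hQ : ∀ x > 0, Q₁ x < Q₂ x) (ha₀ : ∀ x > 0, 0 < a x)
    (hb₀ : ∀ x > 0, 0 < b x) : ∃ c > 1, ∀ X ≥ 1, c * a X ≤ b X := by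
  have hmono := ha.strictMonoOn_div hb hQ ha₀ hb₀
  refine ⟨b 1 / a 1, ?_, fun X hX => ?_⟩
  · have hhalf : 1 ≤ b (1 / 2) / a (1 / 2) := by
      refine le_of_tendsto (ha.tendsto_div_nhdsGT_zero hb) ?_
      filter_upwards [Ioo_mem_nhdsGT (by norm_num : (0 : ℝ) < 1 / 2)] with x hx
      exact (hmono hx.1 (by norm_num) hx.2).le
    exact hhalf.trans_lt (hmono (by norm_num) (by norm_num) (by norm_num))
  · have hX₀ : 0 < X := one_pos.trans_le hX
    rw [← le_div_iff₀ (ha₀ X hX₀)]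
    exact hmono.monotoneOn (mem_Ioi.2 one_pos) hX₀ hX

lemma IsDirichletSolution.exists_one_lt_mul_norm_le {u₁ u₁' u₂ u₂' : ℝ → ℂ}
    (hQ₁ : Continuous Q₁) (hQ₂ : Continuous Q₂) (hQ₀ : ∀ x, 0 ≤ x → 0 ≤ Q₁ x)
    (hQ : ∀ x, 0 ≤ x → Q₁ x < Q₂ x) (hu₁ : IsDirichletSolution (fun x => (Q₁ x : ℂ)) u₁ u₁')
    (hu₂ : IsDirichletSolution (fun x => (Q₂ x : ℂ)) u₂ u₂') :
    ∃ c > 1, ∀ X ≥ 1, c * ‖u₁ X‖ ≤ ‖u₂ X‖ := by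
  have hre {Q : ℝ → ℝ} {u u' : ℝ → ℂ} (hQ : Continuous Q) (hQ₀ : ∀ x, 0 ≤ x → 0 ≤ Q x)
      (hu : IsDirichletSolution (fun x => (Q x : ℂ)) u u') {x : ℝ} (hx : 0 < x) :
      0 < (u x).re ∧ ‖u x‖ = (u x).re := by
    obtain ⟨t, ht, htu⟩ := hu.exists_ofReal_eq hQ hQ₀ hx.le
    rw [← htu, ofReal_re, Complex.norm_of_nonneg (hx.le.trans ht)]
    exact ⟨hx.trans_le ht, rfl⟩
  have hQ₀' : ∀ x, 0 ≤ x → 0 ≤ Q₂ x := fun x hx => (hQ₀ x hx).trans (hQ x hx).le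
  obtain ⟨c, hc, hle⟩ := hu₁.re.exists_one_lt_mul_le hu₂.re (fun x hx => hQ x hx.le)
    (fun x hx => (hre hQ₁ hQ₀ hu₁ hx).1) fun x hx => (hre hQ₂ hQ₀' hu₂ hx).1
  refine ⟨c, hc, fun X hX => ?_⟩
  have hX₀ : 0 < X := one_pos.trans_le hX
  rw [(hre hQ₁ hQ₀ hu₁ hX₀).2, (hre hQ₂ hQ₀' hu₂ hX₀).2]
  exact hle X hX

end Comparison

section Asymptotics

lemma isLittleO_of_hasDerivAt_isLittleO {F : Type*} [NormedAddCommGroup F] [NormedSpace ℝ F]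
    {u u' : ℝ → F} {g g' : ℝ → ℝ} (hu : ∀ᶠ x in atTop, HasDerivAt u (u' x) x)
    (hg : ∀ᶠ x in atTop, HasDerivAt g (g' x) x) (hg' : ∀ᶠ x in atTop, 0 ≤ g' x)
    (hlim : Tendsto g atTop atTop) (ho : u' =o[atTop] g') : u =o[atTop] g := by
  refine Asymptotics.isLittleO_iff.2 fun c hc => ?_
  obtain ⟨x₀, hx₀⟩ := eventually_atTop.1
    (((hu.and hg).and hg').and (Asymptotics.isLittleO_iff.1 ho (half_pos hc)))
  choose! hderiv hbound using hx₀
  filter_upwards [eventually_ge_atTop x₀, hlim.eventually_ge_atTop 0,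
    hlim.eventually_ge_atTop (2 / c * (‖u x₀‖ - c / 2 * g x₀))] with x hx hgx hlarge
  have hincr : ‖u x - u x₀‖ ≤ c / 2 * (g x - g x₀) :=
    image_norm_le_of_norm_deriv_right_le_deriv_boundary'
      (f := fun x => u x - u x₀) (B := fun x => c / 2 * (g x - g x₀)) (f' := u')
      (B' := fun x => c / 2 * g' x) (a := x₀) (b := x)
      (fun y hy => ((hderiv y hy.1).1.1.continuousAt.sub continuousAt_const).continuousWithinAt)
      (fun y hy => ((hderiv y hy.1).1.1.sub_const _).hasDerivWithinAt) (by simp)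
      (fun y hy => (continuousAt_const.mul
        ((hderiv y hy.1).1.2.continuousAt.sub continuousAt_const)).continuousWithinAt)
      (fun y hy => (((hderiv y hy.1).1.2.sub_const _).const_mul _).hasDerivWithinAt)
      (fun y hy => by
        simpa [abs_of_nonneg (hderiv y hy.1).2] using hbound y hy.1) ⟨hx, le_rfl⟩
  have htriangle : ‖u x‖ ≤ ‖u x - u x₀‖ + ‖u x₀‖ := by
    simpa using norm_add_le (u x - u x₀) (u x₀)
  have hhalf : ‖u x₀‖ - c / 2 * g x₀ ≤ c / 2 * g x := by
    rw [div_mul_eq_mul_div, div_le_iff₀ hc] at hlarge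
    linarith
  rw [Real.norm_of_nonneg hgx]
  linarith

lemma tendsto_atTop_of_hasDerivAt {g g' : ℝ → ℝ} (hg : ∀ x, HasDerivAt g (g' x) x)
    (hg' : ∀ᶠ x in atTop, 1 ≤ g' x) : Tendsto g atTop atTop := by
  obtain ⟨x₀, hx₀⟩ := eventually_atTop.1 hg'
  have hmono : MonotoneOn (fun x => g x - x) (Ici x₀) :=
    monotoneOn_of_hasDerivWithinAt_nonneg (convex_Ici x₀)
      (fun x _ => ((hg x).continuousAt.sub continuousAt_id).continuousWithinAt)
      (fun x _ => ((hg x).sub (hasDerivAt_id x)).hasDerivWithinAt)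
      fun x hx => sub_nonneg.2 (hx₀ x (interior_subset hx))
  refine tendsto_atTop_mono' atTop ?_
    (tendsto_atTop_add_const_left atTop (g x₀ - x₀) tendsto_id)
  filter_upwards [eventually_ge_atTop x₀] with x hx
  simpa [le_sub_iff_add_le] using hmono self_mem_Ici hx hx

variable {w : ℝ → ℝ} {q y y' : ℝ → ℂ}

lemma tendsto_zero_of_tendsto_mul (hw_top : Tendsto w atTop atTop)
    (hyw : Tendsto (fun x => y x * w x) atTop (𝓝 1)) : Tendsto y atTop (𝓝 0) := by
  have hinv : Tendsto (fun x => ((w x)⁻¹ : ℂ)) atTop (𝓝 0) := by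
    simpa [Function.comp_def] using
      (continuous_ofReal.tendsto 0).comp (tendsto_inv_atTop_zero.comp hw_top)
  have hprod := hyw.mul hinv
  rw [mul_zero] at hprod
  refine hprod.congr' ?_
  filter_upwards [hw_top.eventually_ne_atTop 0] with x hx
  exact mul_inv_cancel_right₀ (by exact_mod_cast hx) _

lemma eventually_mem_slitPlane (hw_top : Tendsto w atTop atTop)
    (hyw : Tendsto (fun x => y x * w x) atTop (𝓝 1)) : ∀ᶠ x in atTop, y x ∈ slitPlane := by
  filter_upwards [hyw.eventually (isOpen_slitPlane.mem_nhds one_mem_slitPlane),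
    hw_top.eventually_gt_atTop 0] with x hmem hx
  simp only [mem_slitPlane_iff, re_mul_ofReal, im_mul_ofReal, mul_ne_zero_iff] at hmem ⊢
  exact hmem.imp (fun h => pos_of_mul_pos_left h hx.le) And.left

lemma isLittleO_const_div_sq_sub (a : ℂ) (hw_top : Tendsto w atTop atTop)
    (hyw : Tendsto (fun x => y x * w x) atTop (𝓝 1)) :
    (fun x => a / y x ^ 2 - a * (w x ^ 2 : ℝ)) =o[atTop] fun x => w x ^ 2 := by
  have hzero : Tendsto (fun x => a * (((y x * w x) ^ 2)⁻¹ - 1)) atTop (𝓝 0) := by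
    simpa using ((hyw.pow 2).inv₀ (by simp)).sub_const 1 |>.const_mul a
  refine Asymptotics.isLittleO_iff.2 fun c hc => ?_
  filter_upwards [eventually_mem_slitPlane hw_top hyw, hw_top.eventually_ne_atTop 0,
    hzero.norm.eventually_le_const (by simpa using hc)] with x hyx hwx hle
  have hyx : y x ≠ 0 := slitPlane_ne_zero hyx
  have hwx : (w x : ℂ) ≠ 0 := by exact_mod_cast hwx
  have hfactor : a / y x ^ 2 - a * (w x ^ 2 : ℝ) =
      a * (((y x * w x) ^ 2)⁻¹ - 1) * (w x ^ 2 : ℝ) := by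
    push_cast
    field_simp
  rw [hfactor, norm_mul, norm_real]
  gcongr

-- `φ / y - y 0 * G` has derivative `y 0 * (y⁻² - w²) = o(w²)`.
lemma IsDirichletSolution.tendsto_div_mul {φ φ' : ℝ → ℂ} {G : ℝ → ℝ}
    (hG : ∀ x, HasDerivAt G (w x ^ 2) x) (hw_top : Tendsto w atTop atTop)
    (hy : IsODESolution q y y') (hyw : Tendsto (fun x => y x * w x) atTop (𝓝 1))
    (hφ : IsDirichletSolution q φ φ') :
    Tendsto (fun x => ((w x / G x : ℝ) : ℂ) * φ x) atTop (𝓝 (y 0)) := by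
  have hG_top : Tendsto G atTop atTop := tendsto_atTop_of_hasDerivAt hG
    ((hw_top.eventually_ge_atTop 1).mono fun x hx => one_le_pow₀ hx)
  have hy_ne : ∀ᶠ x in atTop, y x ≠ 0 :=
    (eventually_mem_slitPlane hw_top hyw).mono fun x hx => slitPlane_ne_zero hx
  have hwronskian (x : ℝ) : wronskian y y' φ φ' x = y 0 := by
    rw [hy.wronskian_eq hφ.toIsODESolution x 0]
    simp [wronskian, hφ.apply_zero, hφ.deriv_zero]
  have hderiv : ∀ᶠ x in atTop, HasDerivAt (fun x => φ x / y x - y 0 * G x)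
      (y 0 / y x ^ 2 - y 0 * (w x ^ 2 : ℝ)) x := hy_ne.mono fun x hx => by
    have h := hasDerivAt_div_wronskian (hy.hasDerivAt x) (hφ.hasDerivAt x) hx
    rw [hwronskian] at h
    exact h.sub ((hG x).ofReal_comp.const_mul (y 0))
  have hlim : Tendsto (fun x => (G x)⁻¹ • (φ x / y x - y 0 * G x)) atTop (𝓝 0) :=
    (isLittleO_of_hasDerivAt_isLittleO hderiv (.of_forall hG)
      (.of_forall fun x => sq_nonneg (w x)) hG_top
        (isLittleO_const_div_sq_sub _ hw_top hyw)).tendsto_inv_smul_nhds_zero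
  have hprod := (hlim.add_const (y 0)).mul hyw
  rw [zero_add, mul_one] at hprod
  refine hprod.congr' ?_
  filter_upwards [hy_ne, hG_top.eventually_ne_atTop 0] with x hyx hGx
  have hGx : (G x : ℂ) ≠ 0 := by exact_mod_cast hGx
  rw [real_smul]
  push_cast
  field_simp
  ring

end Asymptotics

section Nonvanishing

variable {q y y' : ℝ → ℂ} {c : ℂ}

lemma IsODESolution.energy_nonneg (hy : IsODESolution q y y') (hc : 0 ≤ c.re)
    (hq : ∀ x, 0 ≤ x → 0 ≤ (c * q x).re) (hy₀ : y 0 = 0) {x : ℝ} (hx : 0 ≤ x) :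
    0 ≤ (c * y' x * conj (y x)).re := by
  have hderiv (x : ℝ) : HasDerivAt (fun x => (c * y' x * conj (y x)).re)
      ((c * q x).re * normSq (y x) + c.re * normSq (y' x)) x := by
    have h := reCLM.hasFDerivAt.comp_hasDerivAt x
      (((hy.hasDerivAt_deriv x).const_mul c).mul
        (conjCLE.toContinuousLinearMap.hasFDerivAt.comp_hasDerivAt x (hy.hasDerivAt x)))
    refine h.congr_deriv ?_
    have hsplit : c * (q x * y x) * conj (y x) + c * y' x * conj (y' x) =
        c * q x * normSq (y x) + c * normSq (y' x) := by
      rw [normSq_eq_conj_mul_self, normSq_eq_conj_mul_self]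
      ring
    change (c * (q x * y x) * conj (y x) + c * y' x * conj (y' x)).re = _
    rw [hsplit, add_re, re_mul_ofReal, re_mul_ofReal]
  have hmono : MonotoneOn (fun x => (c * y' x * conj (y x)).re) (Ici 0) :=
    monotoneOn_of_hasDerivWithinAt_nonneg (convex_Ici 0)
      (fun x _ => (hderiv x).continuousAt.continuousWithinAt)
      (fun x _ => (hderiv x).hasDerivWithinAt) fun x hx =>
        add_nonneg (mul_nonneg (hq x (interior_subset hx)) (normSq_nonneg _))
          (mul_nonneg hc (normSq_nonneg _))
  simpa [hy₀] using hmono self_mem_Ici hx hx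

lemma tendsto_re_mul_log_atBot (hc : 0 < c.re) (hy : Tendsto y atTop (𝓝 0))
    (hy_ne : ∀ᶠ x in atTop, y x ≠ 0) : Tendsto (fun x => (c * log (y x)).re) atTop atBot := by
  have hlog : Tendsto (fun x => Real.log ‖y x‖) atTop atBot :=
    Real.tendsto_log_nhdsGT_zero.comp (tendsto_nhdsWithin_iff.2
      ⟨by simpa using hy.norm, hy_ne.mono fun x hx => norm_pos_iff.2 hx⟩)
  refine tendsto_atBot_mono (fun x => ?_)
    (tendsto_atBot_add_const_right _ (|c.im| * Real.pi) (hlog.const_mul_atBot hc))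
  rw [mul_re, log_re, log_im, sub_eq_add_neg]
  gcongr
  calc -(c.im * arg (y x)) ≤ |c.im| * |arg (y x)| := by rw [← abs_mul]; exact neg_le_abs _
    _ ≤ |c.im| * Real.pi := by gcongr; exact abs_arg_le_pi _

-- If `y 0 = 0`, the energy `Re (c y' ȳ)` is nonnegative on `[0, ∞)`, hence `Re (c log y)` is
-- eventually increasing, although `y` decays.
lemma IsODESolution.apply_zero_ne_zero (hy : IsODESolution q y y') (hc : 0 < c.re)
    (hq : ∀ x, 0 ≤ x → 0 ≤ (c * q x).re) (hlim : Tendsto y atTop (𝓝 0))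
    (hslit : ∀ᶠ x in atTop, y x ∈ slitPlane) : y 0 ≠ 0 := by
  intro hy₀
  obtain ⟨x₀, hx₀⟩ := eventually_atTop.1 (hslit.and (eventually_ge_atTop 0))
  have hderiv : ∀ x ∈ Ici x₀,
      HasDerivAt (fun x => (c * log (y x)).re) (c * (y' x / y x)).re x := fun x hx =>
    reCLM.hasFDerivAt.comp_hasDerivAt x (((hy.hasDerivAt x).clog_real (hx₀ x hx).1).const_mul c)
  have hderiv_nonneg : ∀ x ∈ Ici x₀, 0 ≤ (c * (y' x / y x)).re := fun x hx => by
    have hquot : c * (y' x / y x) = c * y' x * conj (y x) * ((normSq (y x))⁻¹ : ℝ) := by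
      rw [div_eq_mul_inv, inv_def]
      ring
    rw [hquot, re_mul_ofReal]
    exact mul_nonneg (hy.energy_nonneg hc.le hq hy₀ (hx₀ x hx).2) (inv_nonneg.2 (normSq_nonneg _))
  have hmono : MonotoneOn (fun x => (c * log (y x)).re) (Ici x₀) :=
    monotoneOn_of_hasDerivWithinAt_nonneg (convex_Ici x₀)
      (fun x hx => (hderiv x hx).continuousAt.continuousWithinAt)
      (fun x hx => (hderiv x (interior_subset hx)).hasDerivWithinAt)
      fun x hx => hderiv_nonneg x (interior_subset hx)
  have hbot := tendsto_re_mul_log_atBot hc hlim (hslit.mono fun x hx => slitPlane_ne_zero hx)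
  obtain ⟨x, hlt, hx⟩ :=
    ((hbot.eventually_lt_atBot (c * log (y x₀)).re).and (eventually_ge_atTop x₀)).exists
  exact hlt.not_ge (hmono self_mem_Ici hx hx)

end Nonvanishing

section DirichletSolution

variable {q y y' g g' : ℝ → ℂ}

lemma IsODESolution.wronskian_ne_zero (hy : IsODESolution q y y') (hg : IsODESolution q g g')
    (hy_lim : Tendsto y atTop (𝓝 0)) (hy_ne : ∀ᶠ x in atTop, y x ≠ 0)
    (hg_lim : ¬Tendsto g atTop (𝓝 0)) (x : ℝ) : wronskian y y' g g' x ≠ 0 := by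
  intro hzero
  obtain ⟨x₀, hx₀⟩ := eventually_atTop.1 hy_ne
  have hderiv : ∀ x ∈ Ioi x₀, HasDerivAt (fun x => g x / y x) 0 x := fun t ht => by
    simpa [hy.wronskian_eq hg t x, hzero] using
      hasDerivAt_div_wronskian (hy.hasDerivAt t) (hg.hasDerivAt t) (hx₀ t (le_of_lt ht))
  have hconst : ∀ t ∈ Ioi x₀, g t / y t = g (x₀ + 1) / y (x₀ + 1) := fun t ht =>
    isOpen_Ioi.is_const_of_deriv_eq_zero isPreconnected_Ioi
      (fun t ht => (hderiv t ht).differentiableAt.differentiableWithinAt)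
      (fun t ht => (hderiv t ht).deriv) ht (lt_add_one x₀)
  refine hg_lim ?_
  have h := hy_lim.const_mul (g (x₀ + 1) / y (x₀ + 1))
  rw [mul_zero] at h
  refine h.congr' ?_
  filter_upwards [eventually_gt_atTop x₀] with t ht
  rw [← hconst t ht, div_mul_cancel₀ _ (hx₀ t ht.le)]

lemma IsODESolution.exists_isDirichletSolution (hy : IsODESolution q y y')
    (hg : IsODESolution q g g') (hW : wronskian y y' g g' 0 ≠ 0) :
    ∃ φ φ', IsDirichletSolution q φ φ' := by
  set W := wronskian y y' g g' 0
  have hcomb {a b : ℝ → ℂ} {a' b' : ℂ} {x : ℝ} (ha : HasDerivAt a a' x) (hb : HasDerivAt b b' x) :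
      HasDerivAt (fun x => (y 0 * a x - g 0 * b x) / W) ((y 0 * a' - g 0 * b') / W) x :=
    ((ha.const_mul (y 0)).sub (hb.const_mul (g 0))).div_const W
  refine ⟨fun x => (y 0 * g x - g 0 * y x) / W, fun x => (y 0 * g' x - g 0 * y' x) / W,
    ⟨fun x => hcomb (hg.hasDerivAt x) (hy.hasDerivAt x), fun x =>
      (hcomb (hg.hasDerivAt_deriv x) (hy.hasDerivAt_deriv x)).congr_deriv (by ring)⟩,
    by simp [mul_comm], ?_⟩
  rw [mul_comm (g 0)]
  exact div_self hW

end DirichletSolution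

section Decaying

variable {V w : ℝ → ℝ} {y y' : ℂ → ℝ → ℂ}

lemma isCircleMonotone_apply {φ φ' : ℂ → ℝ → ℂ} (hV : Continuous V)
    (hV₀ : ∀ x, 0 ≤ x → 0 ≤ V x)
    (hφ : ∀ lam : ℂ, IsDirichletSolution (fun x => V x + lam) (φ lam) (φ' lam)) {X : ℝ}
    (hX : 0 < X) :
    IsCircleMonotone fun lam => φ lam X := by
  refine .of_tendsto ?_ fun lam => (hφ lam).tendsto_symplecticEuler (by fun_prop) hX.le
  filter_upwards [eventually_gt_atTop 0] with n hn
  have hh : 0 < X / n := by positivity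
  exact isCircleMonotone_symplecticEuler hh (fun k => hV₀ _ (by positivity)) hn.ne'

lemma norm_apply_zero_lt {φ φ' : ℂ → ℝ → ℂ} (hV : Continuous V) (hV₀ : ∀ x, 0 ≤ x → 0 ≤ V x)
    {κ : ℝ → ℝ} (hφ : ∀ lam : ℂ, IsDirichletSolution (fun x => V x + lam) (φ lam) (φ' lam))
    {D : ℂ → ℂ} (hD : ∀ lam, Tendsto (fun x => (κ x : ℂ) * φ lam x) atTop (𝓝 (D lam)))
    (hD₀ : D 0 ≠ 0) {r : ℝ} (hr : 0 < r) : ‖D 0‖ < ‖D r‖ := by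
  obtain ⟨c, hc, hle⟩ := IsDirichletSolution.exists_one_lt_mul_norm_le (Q₁ := V)
    (Q₂ := fun x => V x + r) hV (by fun_prop) hV₀ (fun x _ => lt_add_of_pos_right _ hr)
    (by simpa using hφ 0) (by simpa using hφ r)
  calc ‖D 0‖ < c * ‖D 0‖ := lt_mul_of_one_lt_left (norm_pos_iff.2 hD₀) hc
    _ ≤ ‖D r‖ := by
      refine le_of_tendsto_of_tendsto ((hD 0).norm.const_mul c) (hD r).norm ?_
      filter_upwards [eventually_ge_atTop 1] with X hX
      rw [norm_mul, norm_mul, mul_left_comm]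
      gcongr
      exact hle X hX

lemma im_ne_zero_or_re_nonneg_of_re_lt {μ ν : ℂ} (hnorm : ‖μ‖ = ‖ν‖) (hre : μ.re < ν.re) :
    ν.im ≠ 0 ∨ 0 ≤ ν.re := by
  by_contra! h
  have hν : ‖ν‖ = -ν.re := by
    rw [← abs_of_neg h.2]
    exact (abs_re_eq_norm.2 h.1).symm
  linarith [(abs_le.1 (abs_re_le_norm μ)).1]

theorem norm_lt_norm_of_re_lt (hV : Continuous V) (hV₀ : ∀ x, 0 ≤ x → 0 ≤ V x)
    (hw : Continuous w) (hw_top : Tendsto w atTop atTop)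
    (hy : ∀ lam : ℂ, IsODESolution (fun x => V x + lam) (y lam) (y' lam))
    (hyw : ∀ lam, Tendsto (fun x => y lam x * w x) atTop (𝓝 1))
    (hφ : ∀ lam : ℂ, ∃ φ φ', IsDirichletSolution (fun x => V x + lam) φ φ') {μ ν : ℂ}
    (hnorm : ‖μ‖ = ‖ν‖) (hre : μ.re < ν.re) : ‖y μ 0‖ < ‖y ν 0‖ := by
  choose φ φ' hφ using hφ
  have hne {lam : ℂ} (hlam : lam.im ≠ 0 ∨ 0 ≤ lam.re) : y lam 0 ≠ 0 := by
    obtain ⟨c, hc, hcq⟩ := exists_re_pos_re_mul_ofReal_add_nonneg hlam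
    exact (hy lam).apply_zero_ne_zero hc (fun x hx => hcq _ (hV₀ x hx))
      (tendsto_zero_of_tendsto_mul hw_top (hyw lam)) (eventually_mem_slitPlane hw_top (hyw lam))
  have hG (x : ℝ) : HasDerivAt (fun x => ∫ t in (0 : ℝ)..x, w t ^ 2) (w x ^ 2) x :=
    ((hw.pow 2).integral_hasStrictDerivAt 0 x).hasDerivAt
  have hlim (lam : ℂ) := (hφ lam).tendsto_div_mul hG hw_top (hy lam) (hyw lam)
  have hmono : IsCircleMonotone fun lam => y lam 0 :=
    .of_tendsto ((eventually_gt_atTop 0).mono fun X hX =>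
      (isCircleMonotone_apply hV hV₀ hφ hX).const_mul _) hlim
  have hr : 0 < ‖ν‖ := by
    rw [norm_pos_iff]
    rintro rfl
    simp_all
  have h0 : y 0 0 ≠ 0 := hne (by simp)
  exact hmono.norm_lt_norm hr hnorm rfl hre h0 (norm_apply_zero_lt hV hV₀ hφ hlim h0 hr)
    (hne (im_ne_zero_or_re_nonneg_of_re_lt hnorm hre))

end Decaying

section CubicPotential

/-- The inverse of the Liouville–Green profile `x ^ (-3/4) * exp (-(2/5) * x ^ (5/2))` of the
decaying solutions of `u'' = (x³ + lam) u`. -/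
noncomputable def cubicWeight (x : ℝ) : ℝ :=
  x ^ (3 / 4 : ℝ) * Real.exp (2 / 5 * x ^ (5 / 2 : ℝ))

lemma continuous_cubicWeight : Continuous cubicWeight :=
  (Real.continuous_rpow_const (by norm_num)).mul
    (Real.continuous_exp.comp (continuous_const.mul (Real.continuous_rpow_const (by norm_num))))

lemma tendsto_cubicWeight_atTop : Tendsto cubicWeight atTop atTop :=
  (tendsto_rpow_atTop (by norm_num)).atTop_mul_atTop₀ (Real.tendsto_exp_atTop.comp
    ((tendsto_rpow_atTop (by norm_num)).const_mul_atTop (by norm_num)))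

lemma tendsto_rpow_mul_exp_neg_rpow :
    Tendsto (fun x : ℝ => x ^ (3 / 4 : ℝ) * Real.exp (-(2 / 5) * x ^ (5 / 2 : ℝ))) atTop
      (𝓝 0) := by
  refine ((tendsto_rpow_mul_exp_neg_mul_atTop_nhds_zero (3 / 10) (2 / 5) (by norm_num)).comp
    (tendsto_rpow_atTop (by norm_num : (0 : ℝ) < 5 / 2))).congr' ?_
  filter_upwards [eventually_ge_atTop 0] with x hx
  rw [Function.comp_apply, ← Real.rpow_mul hx]
  norm_num

lemma norm_cpow_mul_exp_cpow {ω : ℂ} (hω : ‖ω‖ = 1) (harg : arg ω = 2 * Real.pi / 5) {x : ℝ}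
    (hx : 0 < x) :
    ‖(ω * x) ^ ((3 : ℂ) / 4) * exp (2 / 5 * (ω * x) ^ ((5 : ℂ) / 2))‖ =
      x ^ (3 / 4 : ℝ) * Real.exp (-(2 / 5) * x ^ (5 / 2 : ℝ)) := by
  have hnorm : ‖ω * x‖ = x := by rw [norm_mul, hω, one_mul, Complex.norm_of_nonneg hx.le]
  have hpow₁ : ‖(ω * x) ^ ((3 : ℂ) / 4)‖ = x ^ (3 / 4 : ℝ) := by
    have h := norm_cpow_real (ω * x) (3 / 4)
    rw [hnorm] at h
    simpa using h
  have hpow₂ : (ω * x) ^ ((5 : ℂ) / 2) = ((-x ^ (5 / 2 : ℝ) : ℝ) : ℂ) := by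
    have hangle : 2 * Real.pi / 5 * (5 / 2 : ℝ) = Real.pi := by ring
    have h := cpow_ofReal (ω * x) (5 / 2)
    rw [hnorm, mul_comm ω, arg_real_mul _ hx, harg, hangle, Real.cos_pi, Real.sin_pi] at h
    simpa [mul_comm] using h
  rw [norm_mul, hpow₁, hpow₂, norm_exp]
  congr 2
  simp

namespace IsStdSolutionFamily

variable {f : ℂ → ℂ → ℂ}

lemma hasDerivAt_deriv (hf : IsStdSolutionFamily f) (lam z : ℂ) :
    HasDerivAt (deriv fun w => f w lam) ((z ^ 3 + lam) * f z lam) z := by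
  obtain ⟨hdiff, hode⟩ := hf.1 lam
  rw [← hode]
  exact (differentiableOn_univ.1 (hdiff.differentiableOn.deriv isOpen_univ) z).hasDerivAt

-- The fifth roots of unity act on the solutions: `ω ^ 2 * ((ω x) ^ 3 + ω ^ 3 lam) = x ^ 3 + lam`.
lemma isODESolution_rotate (hf : IsStdSolutionFamily f) (lam : ℂ) {ω : ℂ} (hω : ω ^ 5 = 1) :
    IsODESolution (fun x : ℝ => ((x ^ 3 : ℝ) : ℂ) + lam) (fun x : ℝ => f (ω * x) (ω ^ 3 * lam))
      fun x : ℝ => ω * deriv (fun w => f w (ω ^ 3 * lam)) (ω * x) where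
  hasDerivAt x := by
    refine ((((hf.1 _).1 (ω * x)).hasDerivAt.comp (x : ℂ)
      (hasDerivAt_const_mul ω)).comp_ofReal).congr_deriv ?_
    ring
  hasDerivAt_deriv x := by
    refine (((hf.hasDerivAt_deriv (ω ^ 3 * lam) (ω * x)).comp (x : ℂ)
      (hasDerivAt_const_mul ω)).const_mul ω).comp_ofReal.congr_deriv ?_
    push_cast
    linear_combination ((x : ℂ) ^ 3 + lam) * f (ω * x) (ω ^ 3 * lam) * hω

lemma isODESolution (hf : IsStdSolutionFamily f) (lam : ℂ) :
    IsODESolution (fun x : ℝ => ((x ^ 3 : ℝ) : ℂ) + lam) (fun x : ℝ => f x lam)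
      fun x : ℝ => deriv (fun w => f w lam) x := by
  simpa using hf.isODESolution_rotate lam (one_pow 5)

lemma tendsto_ray (hf : IsStdSolutionFamily f) (lam : ℂ) {ω : ℂ} (hω : ‖ω‖ = 1)
    (harg : |arg ω| < 3 * Real.pi / 5) :
    Tendsto (fun x : ℝ => f (ω * x) lam * (ω * x) ^ ((3 : ℂ) / 4) *
      exp (2 / 5 * (ω * x) ^ ((5 : ℂ) / 2))) atTop (𝓝 1) := by
  obtain ⟨C, -, R, hR, hbound⟩ := hf.2 _ (sub_pos.2 harg) {lam} isCompact_singleton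
  rw [tendsto_iff_norm_sub_tendsto_zero]
  have hrate : Tendsto (fun x : ℝ => C * x ^ (-(1 / 2) : ℝ)) atTop (𝓝 0) := by
    simpa using (tendsto_rpow_neg_atTop (y := 1 / 2) (by norm_num)).const_mul C
  refine squeeze_zero' (.of_forall fun _ => norm_nonneg _) ?_ hrate
  filter_upwards [eventually_ge_atTop R] with x hx
  have hx₀ : 0 < x := hR.trans_le hx
  have hnorm : ‖ω * x‖ = x := by rw [norm_mul, hω, one_mul, Complex.norm_of_nonneg hx₀.le]
  have h := hbound lam rfl (ω * x) (hnorm.symm ▸ hx) (by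
    rw [mul_comm, arg_real_mul _ hx₀, sub_sub_cancel])
  rwa [hnorm] at h

lemma tendsto_mul_cubicWeight (hf : IsStdSolutionFamily f) (lam : ℂ) :
    Tendsto (fun x : ℝ => f x lam * cubicWeight x) atTop (𝓝 1) := by
  refine (hf.tendsto_ray lam norm_one (by simpa using by positivity)).congr' ?_
  filter_upwards [eventually_ge_atTop 0] with x hx
  rw [cubicWeight]
  push_cast [ofReal_cpow hx]
  rw [one_mul, mul_assoc]

lemma not_tendsto_ray_zero (hf : IsStdSolutionFamily f) (lam : ℂ) {ω : ℂ} (hω : ‖ω‖ = 1)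
    (harg : arg ω = 2 * Real.pi / 5) : ¬Tendsto (fun x : ℝ => f (ω * x) lam) atTop (𝓝 0) := by
  intro hzero
  have hone := (hf.tendsto_ray lam hω (by
    rw [harg, abs_of_pos (by positivity)]
    linarith [Real.pi_pos])).norm
  have hprod := hzero.norm.mul tendsto_rpow_mul_exp_neg_rpow
  rw [norm_zero, zero_mul] at hprod
  rw [norm_one] at hone
  refine zero_ne_one (tendsto_nhds_unique (hprod.congr' ?_) hone)
  filter_upwards [eventually_gt_atTop 0] with x hx
  rw [mul_assoc, norm_mul, norm_cpow_mul_exp_cpow hω harg hx]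

lemma exists_isDirichletSolution (hf : IsStdSolutionFamily f) (lam : ℂ) :
    ∃ φ φ', IsDirichletSolution (fun x : ℝ => ((x ^ 3 : ℝ) : ℂ) + lam) φ φ' := by
  set ω : ℂ := exp ((2 * Real.pi / 5 : ℝ) * I)
  have hω : ‖ω‖ = 1 := norm_exp_ofReal_mul_I _
  have harg : arg ω = 2 * Real.pi / 5 := by
    rw [arg_exp_mul_I, toIocMod_eq_self]
    constructor <;> linarith [Real.pi_pos]
  have hω₅ : ω ^ 5 = 1 := by
    rw [← exp_nat_mul, ← exp_two_pi_mul_I]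
    congr 1
    push_cast
    ring
  have hrot := hf.isODESolution_rotate lam hω₅
  have hweight := hf.tendsto_mul_cubicWeight lam
  exact (hf.isODESolution lam).exists_isDirichletSolution hrot
    ((hf.isODESolution lam).wronskian_ne_zero hrot
      (tendsto_zero_of_tendsto_mul tendsto_cubicWeight_atTop hweight)
      ((eventually_mem_slitPlane tendsto_cubicWeight_atTop hweight).mono
        fun x hx => slitPlane_ne_zero hx)
      (hf.not_tendsto_ray_zero _ hω harg) 0)

theorem norm_lt_norm_of_re_lt (hf : IsStdSolutionFamily f) {μ ν : ℂ} (hnorm : ‖μ‖ = ‖ν‖)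
    (hre : μ.re < ν.re) : ‖f 0 μ‖ < ‖f 0 ν‖ := by
  simpa using _root_.norm_lt_norm_of_re_lt (continuous_pow 3) (fun x hx => pow_nonneg hx 3)
    continuous_cubicWeight tendsto_cubicWeight_atTop hf.isODESolution hf.tendsto_mul_cubicWeight
    hf.exists_isDirichletSolution hnorm hre

end IsStdSolutionFamily

end CubicPotential

theorem h_lt_one_general (f : ℂ → ℂ → ℂ) (hf : IsStdSolutionFamily f) (α : ℂ) (hα : ‖α‖ = 1)
    (hα₂ : 0 < (α ^ 2).im) :
    ∀ lam : ℂ, 0 < lam.im →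
      f 0 (-α ^ 2 * lam) ≠ 0 ∧
      ‖f 0 (-(α ^ 2)⁻¹ * lam)‖ < ‖f 0 (-α ^ 2 * lam)‖ := by
  intro lam hlam
  have hinv : (α ^ 2)⁻¹ = conj (α ^ 2) := by simp [inv_def, normSq_eq_norm_sq, hα]
  have hnorm : ‖-(α ^ 2)⁻¹ * lam‖ = ‖-α ^ 2 * lam‖ := by simp [hα]
  have hre : (-α ^ 2 * lam).re - (-(α ^ 2)⁻¹ * lam).re = 2 * ((α ^ 2).im * lam.im) := by
    rw [hinv, neg_mul, neg_mul, neg_re, neg_re, mul_re, mul_re, conj_re, conj_im]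
    ring
  have hlt := hf.norm_lt_norm_of_re_lt hnorm (by linarith [mul_pos hα₂ hlam])
  exact ⟨norm_pos_iff.1 ((norm_nonneg _).trans_lt hlt), hlt⟩

lemma norm_exp_pi_mul_I_div_ten : ‖exp (Real.pi * I / 10)‖ = 1 := by
  simp [norm_exp]

lemma im_exp_pi_mul_I_div_ten_sq_pos : 0 < (exp (Real.pi * I / 10) ^ 2).im := by
  have hpow : exp (Real.pi * I / 10) ^ 2 = exp ((Real.pi / 5 : ℝ) * I) := by
    rw [← exp_nat_mul]
    congr 1
    push_cast
    ring
  rw [hpow, exp_ofReal_mul_I_im]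
  exact Real.sin_pos_of_pos_of_lt_pi (by positivity) (by linarith [Real.pi_pos])

/-- On the open upper half-plane the denominator `ψ₋(0,λ) = f(0, -α²λ)` does not
vanish and `|h(λ)| = |ψ₊(0,λ)/ψ₋(0,λ)| < 1`, where `α = e^{iπ/10}`. -/
theorem h_lt_one (f : ℂ → ℂ → ℂ) (hf : IsStdSolutionFamily f)
    (α : ℂ) (hα : α = Complex.exp (Real.pi * Complex.I / 10)) :
    ∀ lam : ℂ, 0 < lam.im →
      f 0 (-α ^ 2 * lam) ≠ 0 ∧
      ‖f 0 (-(α ^ 2)⁻¹ * lam)‖ < ‖f 0 (-α ^ 2 * lam)‖ :=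
  hα ▸ h_lt_one_general f hf _ norm_exp_pi_mul_I_div_ten im_exp_pi_mul_I_div_ten_sq_pos
end

section
/- ∫₀^∞ (√(t³ + 1) − t^{3/2}) dt = 2·∫₀¹ √(1 − t³) dt. (The constant K' from the Liouville–Green normalization equals the turning-point constant K.) -/
open MeasureTheory

/-!
Both integrals are Beta values, for every real exponent `a > 2` in place of `3`. For `x > 0` and
`w > 0` one has `w < √(x² + 1) - x` iff `x < (w⁻¹ - w) / 2`; with `x = t ^ (a / 2)` the region under
the graph of `√(t ^ a + 1) - t ^ (a / 2)` is therefore, seen from the other axis, the region under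
the graph of `w ↦ ((w⁻¹ - w) / 2) ^ (2 / a)` on `(0, 1)`, whose area is
`B(1 / 2 - 1 / a, 1 + 2 / a) / 2 ^ (1 + 2 / a)`. On the other side `∫₀¹ √(1 - t ^ a) dt` is
`B(1 / a, 3 / 2) / a`. By the duplication and reflection formulas for `Γ` the ratio of the two is
`cos (π / a)`, which is `1 / 2` for `a = 3`.
-/

open Real Set ProbabilityTheory

section Transpose

variable {f g : ℝ → ℝ}

lemma antitoneOn_Ioi_of_lt_iff_lt (hf : ∀ t > 0, 0 ≤ f t)
    (h : ∀ t > 0, ∀ w > 0, w < f t ↔ t < g w) : AntitoneOn f (Ioi 0) := by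
  intro s hs t ht hst
  by_contra! hlt
  obtain ⟨w, hsw, hwt⟩ := exists_between hlt
  have hw : 0 < w := (hf s hs).trans_lt hsw
  exact hsw.not_gt ((h s hs w hw).2 (hst.trans_lt ((h t ht w hw).1 hwt)))

/-- Both integrals are the area of the region `0 < w < f t` over `t > 0`, which `h` reads along the
other axis. -/
lemma integral_Ioi_eq_of_lt_iff_lt (hf : ∀ t > 0, 0 ≤ f t) (hg : ∀ w > 0, 0 ≤ g w)
    (h : ∀ t > 0, ∀ w > 0, w < f t ↔ t < g w) :
    ∫ t in Ioi 0, f t = ∫ w in Ioi 0, g w := by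
  have hf_ae : 0 ≤ᵐ[volume.restrict (Ioi 0)] f := ae_restrict_of_forall_mem measurableSet_Ioi hf
  have hg_ae : 0 ≤ᵐ[volume.restrict (Ioi 0)] g := ae_restrict_of_forall_mem measurableSet_Ioi hg
  have hf_meas : AEMeasurable f (volume.restrict (Ioi 0)) :=
    aemeasurable_restrict_of_antitoneOn measurableSet_Ioi (antitoneOn_Ioi_of_lt_iff_lt hf h)
  have hg_meas : AEMeasurable g (volume.restrict (Ioi 0)) :=
    aemeasurable_restrict_of_antitoneOn measurableSet_Ioi
      (antitoneOn_Ioi_of_lt_iff_lt hg fun w hw t ht ↦ (h t ht w hw).symm)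
  have volume_superlevel {w : ℝ} (hw : w ∈ Ioi 0) :
      volume.restrict (Ioi 0) {t | w < f t} = ENNReal.ofReal (g w) := by
    have : {t | w < f t} ∩ Ioi 0 = Ioo 0 (g w) := by
      ext t
      exact ⟨fun ⟨hwt, ht⟩ ↦ ⟨ht, (h t ht w hw).1 hwt⟩, fun ⟨ht, htw⟩ ↦ ⟨(h t ht w hw).2 htw, ht⟩⟩
    rw [Measure.restrict_apply' measurableSet_Ioi, this, Real.volume_Ioo, sub_zero]
  rw [integral_eq_lintegral_of_nonneg_ae hf_ae hf_meas.aestronglyMeasurable,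
    integral_eq_lintegral_of_nonneg_ae hg_ae hg_meas.aestronglyMeasurable,
    lintegral_eq_lintegral_meas_lt _ hf_ae hf_meas]
  exact congrArg _ (setLIntegral_congr_fun measurableSet_Ioi fun w hw ↦ volume_superlevel hw)

end Transpose

section BetaIntegrals

lemma intervalIntegral_comp_rpow {E : Type*} [NormedAddCommGroup E] [NormedSpace ℝ E]
    (g : ℝ → E) {b r : ℝ} (hb : 0 ≤ b) (hr : 0 < r) :
    ∫ x in 0..b, (r * x ^ (r - 1)) • g (x ^ r) = ∫ y in 0..b ^ r, g y := by
  have hsubst := integral_comp_rpow_Ioi_of_pos (g := (Iic (b ^ r)).indicator g) hr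
  have hmem {x : ℝ} (hx : x ∈ Ioi 0) : x ^ r ∈ Iic (b ^ r) ↔ x ∈ Iic b :=
    rpow_le_rpow_iff (le_of_lt hx) hb hr
  have hind : EqOn (fun x ↦ (r * x ^ (r - 1)) • (Iic (b ^ r)).indicator g (x ^ r))
      ((Iic b).indicator fun x ↦ (r * x ^ (r - 1)) • g (x ^ r)) (Ioi 0) := fun x hx ↦ by
    simp only [indicator_apply, hmem hx, smul_ite, smul_zero]
  rwa [setIntegral_congr_fun measurableSet_Ioi hind, setIntegral_indicator measurableSet_Iic,
    setIntegral_indicator measurableSet_Iic, Ioi_inter_Iic, Ioi_inter_Iic,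
    ← intervalIntegral.integral_of_le hb,
    ← intervalIntegral.integral_of_le (rpow_nonneg hb r)] at hsubst

variable {r u v : ℝ}

lemma integral_rpow_mul_one_sub_rpow (hu : 0 < u) (hv : 0 < v) :
    ∫ x in (0 : ℝ)..1, x ^ (u - 1) * (1 - x) ^ (v - 1) = beta u v := by
  have hcast : Complex.betaIntegral u v =
      ((∫ x in (0 : ℝ)..1, x ^ (u - 1) * (1 - x) ^ (v - 1) : ℝ) : ℂ) := by
    rw [Complex.betaIntegral, ← intervalIntegral.integral_ofReal]
    refine intervalIntegral.integral_congr fun x hx ↦ ?_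
    rw [uIcc_of_le zero_le_one] at hx
    simp only [Complex.ofReal_mul, Complex.ofReal_cpow hx.1,
      Complex.ofReal_cpow (sub_nonneg.2 hx.2), Complex.ofReal_sub, Complex.ofReal_one]
  rw [beta_eq_betaIntegralReal u v hu hv, hcast, Complex.ofReal_re]

lemma integral_rpow_mul_one_sub_rpow_rpow (hr : 0 < r) (hu : 0 < u) (hv : 0 < v) :
    ∫ x in (0 : ℝ)..1, x ^ (u - 1) * (1 - x ^ r) ^ (v - 1) = beta (u / r) v / r := by
  have hsubst := intervalIntegral_comp_rpow
    (fun y ↦ y ^ (u / r - 1) * (1 - y) ^ (v - 1)) zero_le_one hr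
  rw [one_rpow, integral_rpow_mul_one_sub_rpow (div_pos hu hr) hv] at hsubst
  rw [eq_div_iff hr.ne', ← hsubst, ← intervalIntegral.integral_mul_const]
  refine intervalIntegral.integral_congr_Ioo_of_le zero_le_one fun x hx ↦ ?_
  have hpow : x ^ (u - 1) = x ^ (r - 1) * (x ^ r) ^ (u / r - 1) := by
    rw [← rpow_mul hx.1.le, ← rpow_add hx.1]
    congr 1
    field_simp
    ring
  simp only [hpow, smul_eq_mul]
  ring

lemma integral_sqrt_one_sub_rpow {a : ℝ} (ha : 0 < a) :
    ∫ t in (0 : ℝ)..1, √(1 - t ^ a) = a⁻¹ * beta a⁻¹ (3 / 2) := by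
  have hbeta := integral_rpow_mul_one_sub_rpow_rpow ha one_pos (v := 3 / 2) (by norm_num)
  have hexp : (3 / 2 - 1 : ℝ) = 1 / 2 := by norm_num
  simpa only [sub_self, rpow_zero, one_mul, hexp, ← sqrt_eq_rpow, one_div a,
    div_eq_inv_mul _ a] using hbeta

lemma integral_inv_sub_self_div_two_rpow {q : ℝ} (hq : -1 < q) (hq' : q < 1) :
    ∫ w in (0 : ℝ)..1, ((w⁻¹ - w) / 2) ^ q = beta ((1 - q) / 2) (1 + q) / 2 ^ (1 + q) := by
  have hbeta := integral_rpow_mul_one_sub_rpow_rpow two_pos (sub_pos.2 hq')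
    (neg_lt_iff_pos_add'.1 hq)
  rw [rpow_add two_pos, rpow_one, ← div_div, ← hbeta, ← intervalIntegral.integral_div]
  refine intervalIntegral.integral_congr_Ioo_of_le zero_le_one fun w hw ↦ ?_
  have hfactor : (w⁻¹ - w) / 2 = w⁻¹ * (1 - w ^ 2) / 2 := by
    have := hw.1.ne'
    field_simp
  have hw2 : 0 ≤ 1 - w ^ 2 := sub_nonneg.2 (pow_le_one₀ hw.1.le hw.2.le)
  simp only [hfactor, div_rpow (mul_nonneg (inv_nonneg.2 hw.1.le) hw2) two_pos.le,
    mul_rpow (inv_nonneg.2 hw.1.le) hw2, inv_rpow hw.1.le, ← rpow_neg hw.1.le, rpow_two,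
    sub_sub_cancel_left, add_sub_cancel_left]

end BetaIntegrals

lemma Gamma_half_sub_mul_Gamma_half_add (p : ℝ) :
    Gamma (1 / 2 - p) * Gamma (1 / 2 + p) = π / cos (π * p) := by
  convert Gamma_mul_Gamma_one_sub (1 / 2 - p) using 2
  · ring_nf
  · rw [← sin_pi_div_two_sub]
    ring_nf

lemma beta_half_sub_mul_cos {p : ℝ} (hp : p ≠ 0) (hcos : cos (π * p) ≠ 0) :
    beta (1 / 2 - p) (1 + 2 * p) / 2 ^ (1 + 2 * p) * cos (π * p) = p * beta p (3 / 2) := by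
  have duplication : Gamma (1 / 2 + p) * Gamma (p + 1) = Gamma (1 + 2 * p) / 2 ^ (2 * p) * √π := by
    convert Gamma_mul_Gamma_add_half (1 / 2 + p) using 2
    · ring_nf
    · rw [div_eq_mul_inv, ← rpow_neg two_pos.le]
      ring_nf
  have reflection : Gamma (1 / 2 - p) * Gamma (1 / 2 + p) * cos (π * p) = π := by
    rw [Gamma_half_sub_mul_Gamma_half_add, div_mul_cancel₀ _ hcos]
  have Gamma_three_halves : Gamma (3 / 2) = √π / 2 := by
    rw [show (3 / 2 : ℝ) = 1 / 2 + 1 by norm_num, Gamma_add_one (by norm_num), Gamma_one_half_eq]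
    ring
  have hsqrt : √π ≠ 0 := (sqrt_pos.2 pi_pos).ne'
  rw [beta, beta, show 1 / 2 - p + (1 + 2 * p) = p + 3 / 2 by ring, Gamma_three_halves]
  calc
    _ = Gamma (1 / 2 - p) * (Gamma (1 + 2 * p) / 2 ^ (2 * p) * √π) * cos (π * p)
          / (2 * √π * Gamma (p + 3 / 2)) := by
      rw [rpow_add two_pos, rpow_one]
      field_simp
    _ = Gamma (1 / 2 - p) * Gamma (1 / 2 + p) * cos (π * p) * Gamma (p + 1)
          / (2 * √π * Gamma (p + 3 / 2)) := by
      rw [← duplication]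
      ring
    _ = √π * √π * (p * Gamma p) / (2 * √π * Gamma (p + 3 / 2)) := by
      rw [reflection, Gamma_add_one hp, mul_self_sqrt pi_pos.le]
    _ = p * (Gamma p * (√π / 2) / Gamma (p + 3 / 2)) := by
      field_simp

section Profile

lemma lt_sqrt_sq_add_one_sub_iff {x w : ℝ} (hx : 0 ≤ x) (hw : 0 < w) :
    w < √(x ^ 2 + 1) - x ↔ x < (w⁻¹ - w) / 2 := by
  rw [lt_sub_iff_add_lt, lt_sqrt (by positivity), lt_div_iff₀ two_pos, lt_sub_iff_add_lt,
    ← one_div, lt_div_iff₀ hw]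
  constructor <;> intro <;> linarith

variable {a : ℝ}

lemma rpow_div_two_sq {t : ℝ} (ht : 0 ≤ t) : (t ^ (a / 2)) ^ 2 = t ^ a := by
  rw [← rpow_mul_natCast ht, Nat.cast_ofNat, div_mul_cancel₀ _ two_ne_zero]

lemma lt_sqrt_rpow_add_one_sub_iff {t w : ℝ} (ha : 0 < a) (ht : 0 < t) (hw : 0 < w) :
    w < √(t ^ a + 1) - t ^ (a / 2) ↔ t < max ((w⁻¹ - w) / 2) 0 ^ (2 * a⁻¹) := by
  have hexp : 2 * a⁻¹ = (a / 2)⁻¹ := by rw [inv_div, div_eq_mul_inv]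
  rw [hexp, lt_rpow_inv_iff_of_pos ht.le (le_max_right _ _) (half_pos ha),
    ← rpow_div_two_sq ht.le, lt_sqrt_sq_add_one_sub_iff (rpow_nonneg ht.le _) hw, lt_max_iff,
    or_iff_left (rpow_pos_of_pos ht _).not_gt]

lemma integral_Ioi_max_inv_sub_self_div_two_rpow {q : ℝ} (hq : q ≠ 0) :
    ∫ w in Ioi (0 : ℝ), max ((w⁻¹ - w) / 2) 0 ^ q = ∫ w in (0 : ℝ)..1, ((w⁻¹ - w) / 2) ^ q := by
  have hzero : ∀ w ∈ Ioi (0 : ℝ) \ Ioc 0 1, max ((w⁻¹ - w) / 2) 0 ^ q = 0 := fun w ⟨hw, hw1⟩ ↦ by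
    have hle : 1 ≤ w := not_lt.1 fun h ↦ hw1 ⟨hw, h.le⟩
    rw [max_eq_right (by linarith [inv_le_one_of_one_le₀ hle]), zero_rpow hq]
  have hpos : EqOn (fun w ↦ max ((w⁻¹ - w) / 2) 0 ^ q) (fun w ↦ ((w⁻¹ - w) / 2) ^ q)
      (Ioc (0 : ℝ) 1) := fun w ⟨hw, hw1⟩ ↦ by
    simp only [max_eq_left (show 0 ≤ (w⁻¹ - w) / 2 by linarith [(one_le_inv₀ hw).2 hw1])]
  rw [setIntegral_eq_of_subset_of_forall_sdiff_eq_zero measurableSet_Ioi Ioc_subset_Ioi_self hzero,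
    setIntegral_congr_fun measurableSet_Ioc hpos, intervalIntegral.integral_of_le zero_le_one]

lemma integral_Ioi_sqrt_rpow_add_one_sub (ha : 2 < a) :
    ∫ t in Ioi (0 : ℝ), (√(t ^ a + 1) - t ^ (a / 2)) =
      beta (1 / 2 - a⁻¹) (1 + 2 * a⁻¹) / 2 ^ (1 + 2 * a⁻¹) := by
  have ha_pos : 0 < a := two_pos.trans ha
  have hinv_pos : 0 < a⁻¹ := inv_pos.2 ha_pos
  have hinv_lt : a⁻¹ < 2⁻¹ := (inv_lt_inv₀ ha_pos two_pos).2 ha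
  have hnonneg : ∀ t > 0, 0 ≤ √(t ^ a + 1) - t ^ (a / 2) := fun t ht ↦ by
    rw [sub_nonneg, ← rpow_div_two_sq (a := a) (le_of_lt ht)]
    exact le_sqrt_of_sq_le (le_add_of_nonneg_right zero_le_one)
  calc
    _ = ∫ w in Ioi 0, max ((w⁻¹ - w) / 2) 0 ^ (2 * a⁻¹) :=
      integral_Ioi_eq_of_lt_iff_lt hnonneg (fun _ _ ↦ rpow_nonneg (le_max_right _ _) _)
        fun _ ht _ hw ↦ lt_sqrt_rpow_add_one_sub_iff ha_pos ht hw
    _ = ∫ w in (0 : ℝ)..1, ((w⁻¹ - w) / 2) ^ (2 * a⁻¹) :=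
      integral_Ioi_max_inv_sub_self_div_two_rpow (by positivity)
    _ = beta ((1 - 2 * a⁻¹) / 2) (1 + 2 * a⁻¹) / 2 ^ (1 + 2 * a⁻¹) :=
      integral_inv_sub_self_div_two_rpow (by linarith) (by linarith)
    _ = _ := by
      rw [sub_div, mul_div_cancel_left₀ _ two_ne_zero]

end Profile

theorem K_prime_eq_K_general {a : ℝ} (ha : 2 < a) :
    (∫ t in Ioi (0 : ℝ), (√(t ^ a + 1) - t ^ (a / 2))) =
      (∫ t in (0 : ℝ)..1, √(1 - t ^ a)) / cos (π / a) := by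
  have ha_pos : 0 < a := two_pos.trans ha
  have hcos : cos (π / a) ≠ 0 :=
    (cos_pos_of_mem_Ioo ⟨by linarith [div_pos pi_pos ha_pos, pi_pos],
      div_lt_div_of_pos_left pi_pos two_pos ha⟩).ne'
  rw [eq_div_iff hcos, integral_Ioi_sqrt_rpow_add_one_sub ha, integral_sqrt_one_sub_rpow ha_pos]
  rw [div_eq_mul_inv π] at hcos ⊢
  exact beta_half_sub_mul_cos (inv_ne_zero ha_pos.ne') hcos

/-- The Liouville–Green normalization constant equals the turning-point constant:
`∫₀^∞ (√(t³+1) - t^{3/2}) dt = 2 ∫₀¹ √(1-t³) dt`. -/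
theorem K_prime_eq_K :
    (∫ t in Set.Ioi (0 : ℝ), (Real.sqrt (t ^ 3 + 1) - t ^ ((3 : ℝ) / 2))) =
      2 * ∫ t in (0:ℝ)..1, Real.sqrt (1 - t ^ 3) := by
  have h := K_prime_eq_K_general (a := 3) (by norm_num)
  simpa only [rpow_ofNat, cos_pi_div_three, div_div_eq_mul_div, div_one, mul_comm] using h
end
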